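/- arXiv:math/0311393 — 2 statements merged into one kernel-verified Lean document; each statement's English description precedes it below -/
import Mathlib

section
/- Let k ≥ 1 be a fixed integer, let ε > 0, and let n: ℕ → ℕ be a function with n(d) ≤ 2^d and n(d) ≥ 2^{(τ_k + ε)d} for all d. For each d, choose an n(d)-element subset W of {0,1}^d uniformly at random among all n(d)-element subsets, and set P := conv W ⊆ ℝ^d. Then the expected k-face density E[φ_k(P)] tends to 0 as d → ∞. -/
open Filter
open scoped BigOperators

/-- The binary entropy function `h(ξ) = ξ log₂(1/ξ) + (1-ξ) log₂(1/(1-ξ))`. -/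
noncomputable def binEnt (x : ℝ) : ℝ :=
  x * Real.logb 2 x⁻¹ + (1 - x) * Real.logb 2 (1 - x)⁻¹

/-- `H_r = (1/(2^r-2)) ∑_{i=1}^{r-1} C(r,i) h(i/r)`. -/
noncomputable def Hent (r : ℕ) : ℝ :=
  (1 / ((2 : ℝ) ^ r - 2)) * ∑ i ∈ Finset.Icc 1 (r - 1), (r.choose i : ℝ) * binEnt ((i : ℝ) / r)

/-- `τ̃_r = 1 - (1 - 2^{1-r}) H_r`. -/
noncomputable def tauT (r : ℕ) : ℝ := 1 - (1 - (2 : ℝ) ^ ((1 : ℤ) - (r : ℤ))) * Hent r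

/-- `τ_k = τ̃_{k+1}`. -/
noncomputable def tau (k : ℕ) : ℝ := tauT (k + 1)

/-- The 0/1-point of `ℝ^d` associated to a Boolean vector. -/
def bv {d : ℕ} (x : Fin d → Bool) : Fin d → ℝ := fun i => if x i then 1 else 0

/-- The set of 0/1 vertices of the cube, as a `Finset` of `ℝ^d`. -/
noncomputable def cubeV (d : ℕ) : Finset (Fin d → ℝ) := by
  classical exact Finset.univ.image bv

/-- `F` is a face of `P`: either `P` itself or an exposed face, i.e. the set of
points of `P` maximizing some linear functional `x ↦ ∑ i, a i * x i` over `P`. -/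
def IsFace {d : ℕ} (P F : Set (Fin d → ℝ)) : Prop :=
  F = P ∨ ∃ a : Fin d → ℝ,
    F = {x | x ∈ P ∧ ∀ y ∈ P, ∑ i, a i * y i ≤ ∑ i, a i * x i}

/-- `f_k(P)`: the number of `k`-dimensional faces of `P`. -/
noncomputable def faceCount {d : ℕ} (k : ℕ) (P : Set (Fin d → ℝ)) : ℕ :=
  {F : Set (Fin d → ℝ) | IsFace P F ∧ Module.finrank ℝ (vectorSpan ℝ F) = k}.ncard

/-- The `k`-face density `φ_k(conv W) = f_k(conv W) / C(|W|, k+1)`. -/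
noncomputable def faceDensity {d : ℕ} (k : ℕ) (W : Finset (Fin d → ℝ)) : ℝ :=
  (faceCount k (convexHull ℝ (W : Set (Fin d → ℝ))) : ℝ) / (W.card.choose (k + 1) : ℝ)

lemma cheb_moment {α : Type*} [Fintype α] (d : ℕ) (M : ℝ) (f : Fin d → α → ℝ)
    (hf : ∀ i, ∑ a, f i a = 0) (hM : ∀ i a, f i a ^ 2 ≤ M) :
    (∑ ω : Fin d → α, ∑ i, f i (ω i) = 0) ∧
    ∑ ω : Fin d → α, (∑ i, f i (ω i)) ^ 2 ≤ (Fintype.card α : ℝ) ^ d * (d * M) := by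
  induction d with
  | zero => simp
  | succ d ih =>
    obtain ⟨h1, h2⟩ := ih (fun i => f i.succ) (fun i => hf _) (fun i a => hM _ _)
    have key : ∀ F : (Fin (d+1) → α) → ℝ, ∑ ω, F ω = ∑ a : α, ∑ ω : Fin d → α, F (Fin.cons a ω) := by
      intro F
      rw [← (Fin.consEquiv (fun _ : Fin (d+1) => α)).sum_comp, Fintype.sum_prod_type]
      rfl
    constructor
    · rw [key]
      simp only [Fin.sum_univ_succ, Fin.cons_zero, Fin.cons_succ, Finset.sum_add_distrib, h1]
      simp [← Finset.mul_sum, hf]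
    · rw [key]
      simp only [Fin.sum_univ_succ, Fin.cons_zero, Fin.cons_succ, add_sq, Finset.sum_add_distrib]
      have e2 : ∑ x : α, ∑ x_1 : Fin d → α, 2 * f 0 x * ∑ x_2 : Fin d, f x_2.succ (x_1 x_2) = 0 := by
        simp only [← Finset.mul_sum, h1]; simp
      have e1 : ∑ x : α, ∑ x_1 : Fin d → α, f 0 x ^ 2 ≤ (Fintype.card α : ℝ) ^ (d+1) * M := by
        calc _ ≤ ∑ x : α, ∑ x_1 : Fin d → α, M :=
              Finset.sum_le_sum fun x _ => Finset.sum_le_sum fun y _ => hM _ _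
          _ = _ := by simp; ring
      have e3 : ∑ x : α, ∑ x_1 : Fin d → α, (∑ i : Fin d, f i.succ (x_1 i)) ^ 2
          ≤ (Fintype.card α : ℝ) * ((Fintype.card α : ℝ) ^ d * (d * M)) := by
        rw [Finset.sum_const, nsmul_eq_mul, Finset.card_univ]
        gcongr
      rw [e2]
      push_cast
      calc _ ≤ (Fintype.card α : ℝ) ^ (d+1) * M + 0 + (Fintype.card α : ℝ) * ((Fintype.card α : ℝ) ^ d * (d * M)) := by gcongr
        _ = _ := by ring

lemma cheb_count {α : Type*} [Fintype α] [DecidableEq α] (d : ℕ) (hd : 0 < d) (M δ : ℝ) (hδ : 0 < δ)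
    (f : Fin d → α → ℝ)
    (hf : ∀ i, ∑ a, f i a = 0) (hM : ∀ i a, f i a ^ 2 ≤ M) :
    ((Finset.univ.filter (fun ω : Fin d → α => ∑ i, f i (ω i) < - (δ * d))).card : ℝ)
      ≤ (Fintype.card α : ℝ) ^ d * (M / (δ ^ 2 * d)) := by
  classical
  have h := (cheb_moment d M f hf hM).2
  set B := Finset.univ.filter (fun ω : Fin d → α => ∑ i, f i (ω i) < - (δ * d)) with hB
  have hd' : (0:ℝ) < d := by exact_mod_cast hd
  have h3 : (B.card : ℝ) * (δ * d) ^ 2 ≤ ∑ ω : Fin d → α, (∑ i, f i (ω i)) ^ 2 := by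
    calc (B.card : ℝ) * (δ * d) ^ 2 = ∑ ω ∈ B, (δ * d) ^ 2 := by simp
      _ ≤ ∑ ω ∈ B, (∑ i, f i (ω i)) ^ 2 := by
          apply Finset.sum_le_sum
          intro ω hω
          have := (Finset.mem_filter.1 hω).2
          have : 0 < δ * d := by positivity
          nlinarith
      _ ≤ _ := Finset.sum_le_sum_of_subset_of_nonneg (Finset.subset_univ _) (fun _ _ _ => sq_nonneg _)
  have h4 := h3.trans h
  have : (Fintype.card α : ℝ) ^ d * (M / (δ ^ 2 * d)) = (Fintype.card α : ℝ) ^ d * (d * M) / (δ * d) ^ 2 := by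
    field_simp
  rw [this, le_div_iff₀ (by positivity)]
  exact h4

/-- number of ones in coordinate column -/
def ones {r : ℕ} (v : Fin r → Bool) : ℕ := (Finset.univ.filter (fun m => v m = true)).card

def wt {r : ℕ} (v : Fin r → Bool) (m : Fin r) : ℕ := (Finset.univ.filter (fun m' => v m' = v m)).card

lemma ones_le {r : ℕ} (v : Fin r → Bool) : ones v ≤ r := by
  unfold ones
  exact (Finset.card_le_univ _).trans (by simp)

lemma card_false {r : ℕ} (v : Fin r → Bool) :
    (Finset.univ.filter (fun m => v m = false)).card = r - ones v := by
  have := Finset.card_filter_add_card_filter_not (s := (Finset.univ : Finset (Fin r))) (fun m => v m = true)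
  simp only [Bool.not_eq_true, Finset.card_univ, Fintype.card_fin] at this
  unfold ones
  omega

lemma wt_pos {r : ℕ} (v : Fin r → Bool) (m : Fin r) : 0 < wt v m :=
  Finset.card_pos.2 ⟨m, by simp⟩

lemma wt_le {r : ℕ} (v : Fin r → Bool) (m : Fin r) : wt v m ≤ r :=
  (Finset.card_le_univ _).trans (by simp)

lemma wt_true {r : ℕ} (v : Fin r → Bool) (m : Fin r) (h : v m = true) : wt v m = ones v := by
  unfold wt ones; rw [h]

lemma wt_false {r : ℕ} (v : Fin r → Bool) (m : Fin r) (h : v m = false) : wt v m = r - ones v := by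
  rw [← card_false]; unfold wt; rw [h]

noncomputable def gg {r : ℕ} (v : Fin r → Bool) (m : Fin r) : ℝ := Real.logb 2 (r / wt v m)

lemma gg_nonneg {r : ℕ} (v : Fin r → Bool) (m : Fin r) : 0 ≤ gg v m := by
  unfold gg
  apply Real.logb_nonneg (by norm_num)
  rw [le_div_iff₀ (by exact_mod_cast wt_pos v m), one_mul]
  exact_mod_cast wt_le v m

lemma gg_le {r : ℕ} (v : Fin r → Bool) (m : Fin r) : gg v m ≤ r := by
  unfold gg
  have hr : (0:ℝ) < r := by exact_mod_cast (wt_pos v m).trans_le (wt_le v m)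
  have hw : (1:ℝ) ≤ wt v m := by exact_mod_cast wt_pos v m
  rw [Real.logb_le_iff_le_rpow (by norm_num) (by positivity)]
  rw [Real.rpow_natCast]
  calc (r:ℝ) / wt v m ≤ r := div_le_self hr.le hw
    _ ≤ 2 ^ r := by exact_mod_cast Nat.lt_two_pow_self.le

lemma sum_gg {r : ℕ} (hr : 0 < r) (v : Fin r → Bool) :
    ∑ m, gg v m = r * binEnt ((ones v : ℝ) / r) := by
  have hr' : (0:ℝ) < r := by exact_mod_cast hr
  rw [← Finset.sum_filter_add_sum_filter_not Finset.univ (fun m => v m = true)]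
  have h1 : ∑ m ∈ Finset.univ.filter (fun m => v m = true), gg v m = ones v * Real.logb 2 (r / ones v) := by
    rw [Finset.sum_congr rfl (g := fun _ => Real.logb 2 (r / ones v))]
    · simp [ones]
    · intro m hm
      simp only [gg, wt_true v m (Finset.mem_filter.1 hm).2]
  have h2 : ∑ m ∈ Finset.univ.filter (fun m => ¬ v m = true), gg v m
      = (r - ones v : ℝ) * Real.logb 2 (r / (r - ones v)) := by
    simp only [Bool.not_eq_true]
    rw [Finset.sum_congr rfl (g := fun _ => Real.logb 2 (r / (r - ones v)))]
    · rw [Finset.sum_const, card_false, nsmul_eq_mul, Nat.cast_sub (ones_le v)]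
    · intro m hm
      simp only [gg, wt_false v m (Finset.mem_filter.1 hm).2, Nat.cast_sub (ones_le v)]
  rw [h1, h2]
  unfold binEnt
  have : 1 - (ones v : ℝ) / r = (r - ones v) / r := by field_simp
  rw [this, inv_div, inv_div]
  field_simp

def XX {d r : ℕ} (V : Fin d → Fin r → Bool) (s : Fin d → Fin r) : Fin d → Bool := fun i => V i (s i)

lemma fibre {d r : ℕ} (V : Fin d → Fin r → Bool) (s : Fin d → Fin r) :
    ((Finset.univ.filter (fun s' => XX V s' = XX V s)).card : ℝ)
      = (r:ℝ) ^ d * (2:ℝ) ^ (-(∑ i, gg (V i) (s i))) := by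
  have h1 : Finset.univ.filter (fun s' => XX V s' = XX V s)
      = Fintype.piFinset (fun i => Finset.univ.filter (fun m' => V i m' = V i (s i))) := by
    ext s'
    simp [XX, funext_iff]
  rw [h1, Fintype.card_piFinset, ← Finset.sum_neg_distrib, Real.rpow_sum_of_pos (by norm_num)]
  push_cast
  have : (r:ℝ)^d = ∏ i : Fin d, (r:ℝ) := by simp
  rw [this, ← Finset.prod_mul_distrib]
  apply Finset.prod_congr rfl
  intro i _
  have hw : (0:ℝ) < wt (V i) (s i) := by exact_mod_cast wt_pos _ _
  have hr : (0:ℝ) < r := by exact_mod_cast (wt_pos (V i) (s i)).trans_le (wt_le _ _)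
  rw [Real.rpow_neg (by norm_num), gg, Real.rpow_logb (by norm_num) (by norm_num) (by positivity)]
  rw [inv_div]
  field_simp
  rfl

/-- barycenter -/
noncomputable def bary {d r : ℕ} (V : Fin d → Fin r → Bool) : Fin d → ℝ :=
  fun i => (ones (V i) : ℝ) / r

lemma shift_count {d r : ℕ} [NeZero r] (V : Fin d → Fin r → Bool) (a : Fin d → ℝ) :
    (r : ℝ) ^ d ≤ (r : ℝ) * ((Finset.univ.filter (fun s : Fin d → Fin r =>
      ∑ i, a i * bary V i ≤ ∑ i, a i * bv (XX V s) i)).card : ℝ) := by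
  classical
  set A := Finset.univ.filter (fun s : Fin d → Fin r =>
      ∑ i, a i * bary V i ≤ ∑ i, a i * bv (XX V s) i) with hA
  have hcov : (Finset.univ : Finset (Fin d → Fin r)) ⊆
      Finset.univ.biUnion (fun m : Fin r => A.image (fun s i => s i - m)) := by
    intro s _
    have hsum : ∑ m : Fin r, ∑ i, a i * bary V i ≤
        ∑ m : Fin r, ∑ i, a i * bv (XX V (fun i => s i + m)) i := by
      have hr0 : (0:ℝ) < r := by exact_mod_cast Nat.pos_of_neZero r
      rw [Finset.sum_comm, Finset.sum_comm (s := (Finset.univ : Finset (Fin r)))]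
      apply le_of_eq
      apply Finset.sum_congr rfl
      intro i _
      rw [← Finset.mul_sum, ← Finset.mul_sum]
      congr 1
      have : ∑ m : Fin r, bv (XX V (fun i => s i + m)) i = ∑ m : Fin r, (if V i m then (1:ℝ) else 0) := by
        simp only [bv, XX]
        exact Fintype.sum_equiv (Equiv.addLeft (s i)) _ (fun m => if V i m = true then (1:ℝ) else 0) (fun _ => rfl)
      rw [this]
      simp only [bary, ones, Finset.sum_const, Finset.card_univ, Fintype.card_fin, nsmul_eq_mul]
      rw [Finset.sum_boole]
      field_simp
    obtain ⟨m, _, hm⟩ := Finset.exists_le_of_sum_le ⟨0, Finset.mem_univ _⟩ hsum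
    simp only [Finset.mem_biUnion, Finset.mem_univ, true_and, Finset.mem_image]
    refine ⟨m, fun i => s i + m, by simp [hA, hm], by ext i; simp⟩
  have h := Finset.card_le_card hcov
  have h2 := h.trans Finset.card_biUnion_le
  have h3 : ∑ m : Fin r, (A.image (fun s i => s i - m)).card ≤ ∑ m : Fin r, A.card :=
    Finset.sum_le_sum fun m _ => Finset.card_image_le
  have h4 := h2.trans h3
  simp only [Finset.card_univ, Fintype.card_fun, Fintype.card_fin, Finset.sum_const, smul_eq_mul] at h4
  exact_mod_cast h4

/-- Every half-space through the barycentre contains many cube points. -/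
lemma halfspace_count {d r : ℕ} [NeZero r] (hd : 0 < d) (V : Fin d → Fin r → Bool) (c δ : ℝ) (hδ : 0 < δ)
    (hdl : 2 * (r : ℝ) ^ 3 / δ ^ 2 ≤ d)
    (hV : c * d ≤ ∑ i, binEnt ((ones (V i) : ℝ) / r)) (a : Fin d → ℝ) :
    (2:ℝ) ^ ((c - δ) * d) / (2 * r) ≤ ((Finset.univ.filter (fun x : Fin d → Bool =>
      ∑ i, a i * bary V i ≤ ∑ i, a i * bv x i)).card : ℝ) := by
  classical
  have hr0 : 0 < r := Nat.pos_of_neZero r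
  have hr' : (0:ℝ) < r := by exact_mod_cast hr0
  have hd' : (0:ℝ) < d := by exact_mod_cast hd
  set f : Fin d → Fin r → ℝ := fun i m => gg (V i) m - binEnt ((ones (V i) : ℝ) / r) with hfdef
  have hmean : ∀ i, ∑ m, gg (V i) m = r * binEnt ((ones (V i) : ℝ) / r) := fun i => sum_gg hr0 _
  have hf : ∀ i, ∑ m, f i m = 0 := by
    intro i
    simp only [hfdef, Finset.sum_sub_distrib, hmean]
    simp
  have hM : ∀ i m, f i m ^ 2 ≤ (r:ℝ)^2 := by
    intro i m
    have h0 : 0 ≤ r * binEnt ((ones (V i) : ℝ) / r) := by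
      rw [← hmean]; exact Finset.sum_nonneg fun m _ => gg_nonneg _ _
    have h1 : r * binEnt ((ones (V i) : ℝ) / r) ≤ r * r := by
      rw [← hmean]
      calc _ ≤ ∑ m : Fin r, (r:ℝ) := Finset.sum_le_sum fun m _ => gg_le _ _
        _ = _ := by simp
    have h0' := nonneg_of_mul_nonneg_right h0 hr'
    have h1' := le_of_mul_le_mul_left h1 hr'
    apply sq_le_sq'
    · have := gg_nonneg (V i) m
      simp only [hfdef]; linarith
    · have := gg_le (V i) m
      simp only [hfdef]; linarith
  have hch := cheb_count d hd ((r:ℝ)^2) δ hδ f hf hM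
  set B := Finset.univ.filter (fun ω : Fin d → Fin r => ∑ i, f i (ω i) < - (δ * d)) with hB
  set A := Finset.univ.filter (fun s : Fin d → Fin r =>
      ∑ i, a i * bary V i ≤ ∑ i, a i * bv (XX V s) i) with hA
  have hsh : (r:ℝ)^d ≤ r * (A.card : ℝ) := shift_count V a
  set H := Finset.univ.filter (fun x : Fin d → Bool => ∑ i, a i * bary V i ≤ ∑ i, a i * bv x i) with hH
  have hBc : (B.card : ℝ) ≤ (r:ℝ)^d / (2 * r) := by
    refine hch.trans ?_
    rw [Fintype.card_fin, div_eq_mul_one_div ((r:ℝ)^d)]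
    refine mul_le_mul_of_nonneg_left ?_ (by positivity)
    rw [div_le_div_iff₀ (by positivity) (by positivity)]
    rw [div_le_iff₀ (by positivity)] at hdl
    nlinarith
  have hG : (r:ℝ)^d / (2 * r) ≤ ((A \ B).card : ℝ) := by
    have h1 : (A.card : ℝ) ≤ (A \ B).card + B.card := by
      have := Finset.card_le_card_sdiff_add_card (s := A) (t := B)
      exact_mod_cast this
    have h2 : (r:ℝ)^d / r ≤ A.card := by
      rw [div_le_iff₀ hr']; linarith
    have h3 : (r:ℝ)^d / r = (r:ℝ)^d / (2 * r) + (r:ℝ)^d / (2 * r) := by field_simp; ring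
    linarith
  have hfib : ((A \ B).card : ℝ) ≤ (r:ℝ)^d * (2:ℝ) ^ (-((c - δ) * d)) * H.card := by
    have himg : (A \ B).image (XX V) ⊆ H := by
      intro x hx
      obtain ⟨s, hs, rfl⟩ := Finset.mem_image.1 hx
      have := (Finset.mem_filter.1 (Finset.mem_sdiff.1 hs).1).2
      simp [hH, this]
    have hmaps : ∀ s ∈ A \ B, XX V s ∈ H := fun s hs => himg (Finset.mem_image_of_mem _ hs)
    rw [Finset.card_eq_sum_card_fiberwise hmaps]
    push_cast
    calc _ ≤ ∑ x ∈ H, (r:ℝ)^d * (2:ℝ) ^ (-((c - δ) * d)) := by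
          apply Finset.sum_le_sum
          intro x hx
          by_cases hex : ∃ s ∈ A \ B, XX V s = x
          · obtain ⟨s, hs, rfl⟩ := hex
            calc _ ≤ ((Finset.univ.filter (fun s' => XX V s' = XX V s)).card : ℝ) := by
                  gcongr; exact Finset.subset_univ _
              _ = (r:ℝ) ^ d * (2:ℝ) ^ (-(∑ i, gg (V i) (s i))) := fibre V s
              _ ≤ _ := by
                  gcongr
                  · norm_num
                  have hnb : ¬ (∑ i, f i (s i) < - (δ * d)) := by
                    intro h
                    exact (Finset.mem_sdiff.1 hs).2 (by simp [hB, h])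
                  simp only [hfdef, Finset.sum_sub_distrib] at hnb
                  linarith
          · have : (A \ B).filter (fun s => XX V s = x) = ∅ := by
              apply Finset.filter_eq_empty_iff.2
              intro s hs h
              exact hex ⟨s, hs, h⟩
            rw [this]
            simp; positivity
      _ = _ := by simp; ring
  have h5 := hG.trans hfib
  rw [Real.rpow_neg (by norm_num)] at h5
  have hp : (0:ℝ) < 2 ^ ((c - δ) * d) := by positivity
  have hrd : (0:ℝ) < (r:ℝ)^d := by positivity
  rw [div_le_iff₀ (by positivity)]
  rw [div_le_iff₀ (by positivity)] at h5
  have h6 : (r:ℝ)^d * ((2:ℝ) ^ ((c - δ) * d)) ≤ (r:ℝ)^d * (H.card * (2 * r)) := by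
    calc _ ≤ ((r:ℝ)^d * ((2:ℝ) ^ ((c - δ) * d))⁻¹ * H.card * (2 * r)) * (2:ℝ) ^ ((c - δ) * d) := by
          gcongr
      _ = _ := by field_simp
  exact le_of_mul_le_mul_left h6 hrd

/-- linear functional given by a vector -/
noncomputable def ell {d : ℕ} (a : Fin d → ℝ) : (Fin d → ℝ) →ₗ[ℝ] ℝ where
  toFun x := ∑ i, a i * x i
  map_add' x y := by simp [mul_add, Finset.sum_add_distrib]
  map_smul' c x := by simp [Finset.mul_sum]; exact Finset.sum_congr rfl fun i _ => by ring

lemma ell_apply {d : ℕ} (a x : Fin d → ℝ) : ell a x = ∑ i, a i * x i := rfl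

lemma bv_injective {d : ℕ} : Function.Injective (bv : (Fin d → Bool) → (Fin d → ℝ)) := by
  intro x y h
  ext i
  have := congrFun h i
  simp only [bv] at this
  cases hx : x i <;> cases hy : y i <;> simp_all

noncomputable def HS (d : ℕ) : Finset (Finset (Fin d → Bool)) := by
  classical exact Finset.univ.filter (fun A => ∃ (a : Fin d → ℝ) (c : ℝ),
    A = Finset.univ.filter (fun x => c ≤ ∑ i, a i * bv x i))

lemma mem_HS {d : ℕ} (a : Fin d → ℝ) (c : ℝ) :
    Finset.univ.filter (fun x : Fin d → Bool => c ≤ ∑ i, a i * bv x i) ∈ HS d := by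
  classical
  unfold HS
  simp only [Finset.mem_filter, Finset.mem_univ, true_and]
  exact ⟨a, c, by congr⟩

lemma HS_shatters {d : ℕ} (s : Finset (Fin d → Bool)) (hs : (HS d).Shatters s) : s.card ≤ d + 1 := by
  classical
  by_contra hcon
  push Not at hcon
  have hdep : ¬ AffineIndependent ℝ (fun x : s => bv x.1) := by
    intro h
    have h1 := h.card_le_finrank_succ
    have h2 := (vectorSpan ℝ (Set.range (fun x : s => bv x.1))).finrank_le
    simp at h1 h2
    omega
  obtain ⟨I, y, hy1, hy2⟩ := Convex.radon_partition hdep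
  obtain ⟨A, hA, hAs⟩ := hs (t := s.filter (fun x => ∃ h : x ∈ s, (⟨x, h⟩ : s) ∈ I)) (Finset.filter_subset _ _)
  unfold HS at hA
  obtain ⟨a, c, hac⟩ := (Finset.mem_filter.1 hA).2
  have hmem : ∀ x (h : x ∈ s), x ∈ A ↔ (⟨x, h⟩ : s) ∈ I := by
    intro x h
    have : x ∈ s ∩ A ↔ x ∈ s.filter (fun x => ∃ h : x ∈ s, (⟨x, h⟩ : s) ∈ I) := by rw [hAs]
    simp [h] at this
    exact this
  have h1 : convexHull ℝ ((fun x : s => bv x.1) '' I) ⊆ {y | c ≤ ell a y} := by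
    apply convexHull_min _ (convex_halfSpace_ge (ell a).isLinear c)
    rintro _ ⟨⟨x, hx⟩, hxI, rfl⟩
    have := (hmem x hx).2 hxI
    rw [hac] at this
    simpa [ell_apply] using this
  have h2 : convexHull ℝ ((fun x : s => bv x.1) '' Iᶜ) ⊆ {y | ell a y < c} := by
    apply convexHull_min _ (convex_halfSpace_lt (ell a).isLinear c)
    rintro _ ⟨⟨x, hx⟩, hxI, rfl⟩
    have := mt (hmem x hx).1 hxI
    rw [hac] at this
    simpa [ell_apply] using this
  have := h1 hy1
  have := h2 hy2
  simp only [Set.mem_ofPred_eq] at *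
  linarith

lemma HS_card (d : ℕ) : (HS d).card ≤ (d + 2) * (2 ^ d) ^ (d + 1) := by
  classical
  have hvc : (HS d).vcDim ≤ d + 1 := by
    unfold Finset.vcDim
    apply Finset.sup_le
    intro s hs
    exact HS_shatters s (Finset.mem_shatterer.1 hs)
  calc (HS d).card ≤ (HS d).shatterer.card := Finset.card_le_card_shatterer _
    _ ≤ ∑ j ∈ Finset.Iic (HS d).vcDim, (Fintype.card (Fin d → Bool)).choose j :=
        Finset.card_shatterer_le_sum_vcDim
    _ ≤ ∑ j ∈ Finset.Iic (d+1), (Fintype.card (Fin d → Bool)).choose j :=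
        Finset.sum_le_sum_of_subset (Finset.Iic_subset_Iic.2 hvc)
    _ ≤ ∑ j ∈ Finset.Iic (d+1), (2 ^ d) ^ (d + 1) := by
        apply Finset.sum_le_sum
        intro j hj
        simp only [Fintype.card_fun, Fintype.card_bool, Fintype.card_fin]
        exact (Nat.choose_le_pow _ _).trans (Nat.pow_le_pow_right (by positivity) (Finset.mem_Iic.1 hj))
    _ = _ := by simp

lemma choose_ratio (N q m : ℕ) (hq : q ≤ N) :
    (N - q).descFactorial m * N ^ m ≤ N.descFactorial m * (N - q) ^ m := by
  induction m with
  | zero => simp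
  | succ m ih =>
    rw [Nat.descFactorial_succ, Nat.descFactorial_succ, pow_succ, pow_succ]
    have h : (N - q - m) * N ≤ (N - m) * (N - q) := by
      rcases le_total N m with h | h
      · have : N - q - m = 0 := by omega
        simp [this]
      · rcases le_total (N - q) m with h' | h'
        · have : N - q - m = 0 := by omega
          simp [this]
        · obtain ⟨p, rfl⟩ := Nat.exists_eq_add_of_le hq
          simp only [Nat.add_sub_cancel_left] at *
          obtain ⟨t, rfl⟩ := Nat.exists_eq_add_of_le h'
          have e1 : m + t - m = t := by omega
          have e2 : q + (m + t) - m = q + t := by omega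
          rw [e1, e2]
          nlinarith
    calc _ = ((N - q).descFactorial m * N ^ m) * ((N - q - m) * N) := by ring
      _ ≤ (N.descFactorial m * (N - q) ^ m) * ((N - m) * (N - q)) := Nat.mul_le_mul ih h
      _ = _ := by ring

lemma choose_ratio_exp (N q m : ℕ) (hq : q ≤ N) (hN : 0 < N) :
    ((N - q).choose m : ℝ) ≤ N.choose m * Real.exp (-(q * m / N : ℝ)) := by
  have h := choose_ratio N q m hq
  rw [Nat.descFactorial_eq_factorial_mul_choose, Nat.descFactorial_eq_factorial_mul_choose, mul_assoc,
    mul_assoc] at h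
  have h' := Nat.le_of_mul_le_mul_left h (Nat.factorial_pos m)
  have h2 : ((N - q).choose m : ℝ) * (N:ℝ)^m ≤ N.choose m * ((N:ℝ) - q)^m := by
    have : (((N - q).choose m * N ^ m : ℕ) : ℝ) ≤ ((N.choose m * (N - q)^m : ℕ) : ℝ) := by exact_mod_cast h'
    push_cast [Nat.cast_sub hq] at this
    exact this
  have hN' : (0:ℝ) < N := by exact_mod_cast hN
  have h3 : ((N:ℝ) - q)^m ≤ (N:ℝ)^m * Real.exp (-(q * m / N : ℝ)) := by
    have e : Real.exp (-(q * m / N : ℝ)) = Real.exp (-(q/N : ℝ)) ^ m := by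
      rw [← Real.exp_nat_mul]; congr 1; ring
    rw [e, ← mul_pow]
    have hqN : (q:ℝ) ≤ N := by exact_mod_cast hq
    apply pow_le_pow_left₀ (by linarith)
    have := Real.add_one_le_exp (-(q/N : ℝ))
    calc (N:ℝ) - q = N * (-(q/N) + 1) := by field_simp; ring
      _ ≤ _ := by gcongr
  have h4 : ((N - q).choose m : ℝ) * (N:ℝ)^m ≤ (N.choose m * Real.exp (-(q * m / N : ℝ))) * (N:ℝ)^m := by
    calc _ ≤ _ := h2
      _ ≤ N.choose m * ((N:ℝ)^m * Real.exp (-(q * m / N : ℝ))) := by gcongr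
      _ = _ := by ring
  exact le_of_mul_le_mul_right h4 (by positivity)

lemma face_hull {d : ℕ} (a : Fin d → ℝ) (μ : ℝ) (T : Set (Fin d → ℝ)) (hT : ∀ y ∈ T, ell a y ≤ μ)
    (x : Fin d → ℝ) (hx : x ∈ convexHull ℝ T) (hxμ : ell a x = μ) :
    x ∈ convexHull ℝ {y | y ∈ T ∧ ell a y = μ} := by
  have hC : Convex ℝ {x | ell a x ≤ μ ∧ (ell a x = μ → x ∈ convexHull ℝ {y | y ∈ T ∧ ell a y = μ})} := by
    intro x hx y hy s t hs ht hst
    have e : ell a (s • x + t • y) = s * ell a x + t * ell a y := by simp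
    have hx1 := hx.1
    have hy1 := hy.1
    refine ⟨?_, ?_⟩
    · rw [e]
      calc s * ell a x + t * ell a y ≤ s * μ + t * μ := by gcongr
        _ = μ := by rw [← add_mul, hst, one_mul]
    · intro h
      rw [e] at h
      rcases hs.eq_or_lt with h0 | h0
      · have ht1 : t = 1 := by linarith
        subst h0; subst ht1
        simp only [zero_smul, zero_add, one_smul]
        exact hy.2 (by linarith)
      rcases ht.eq_or_lt with h0' | h0'
      · have ht1 : s = 1 := by linarith
        subst h0'; subst ht1
        simp only [zero_smul, add_zero, one_smul]
        exact hx.2 (by linarith)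
      have h1 : s * (μ - ell a x) + t * (μ - ell a y) = 0 := by
        have : s * μ + t * μ = μ := by rw [← add_mul, hst, one_mul]
        linarith
      have p1 : 0 ≤ s * (μ - ell a x) := mul_nonneg hs (by linarith)
      have p2 : 0 ≤ t * (μ - ell a y) := mul_nonneg ht (by linarith)
      have q1 : μ - ell a x = 0 := by
        have : s * (μ - ell a x) = 0 := by linarith
        rcases mul_eq_zero.1 this with h | h
        · linarith
        · exact h
      have q2 : μ - ell a y = 0 := by
        have : t * (μ - ell a y) = 0 := by linarith
        rcases mul_eq_zero.1 this with h | h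
        · linarith
        · exact h
      exact convex_convexHull ℝ _ (hx.2 (by linarith)) (hy.2 (by linarith)) hs ht hst
  have hsub : convexHull ℝ T ⊆ _ := convexHull_min (fun y hy => by
    exact ⟨hT y hy, fun h => subset_convexHull ℝ _ ⟨hy, h⟩⟩) hC
  exact (hsub hx).2 hxμ

def Bad {d : ℕ} (W S : Finset (Fin d → ℝ)) : Prop :=
  ((S.card : ℝ)⁻¹ • ∑ x ∈ S, x) ∉ convexHull ℝ ((W : Set (Fin d → ℝ)) \ affineSpan ℝ (S : Set (Fin d → ℝ)))

lemma ell_affineSpan {d : ℕ} (a : Fin d → ℝ) (μ : ℝ) (T : Set (Fin d → ℝ)) (hT : ∀ y ∈ T, ell a y = μ)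
    (x : Fin d → ℝ) (hx : x ∈ affineSpan ℝ T) : ell a x = μ := by
  refine affineSpan_induction (p := fun x => ell a x = μ) hx hT ?_
  intro c u v w hu hv hw
  simp [hu, hv, hw]

open Classical in
lemma face_bound {d : ℕ} (k : ℕ) (hk : 1 ≤ k) (W : Finset (Fin d → ℝ)) :
    faceCount k (convexHull ℝ (W : Set (Fin d → ℝ))) ≤ ((W.powersetCard (k+1)).filter (Bad W)).card := by
  set P := convexHull ℝ (W : Set (Fin d → ℝ)) with hP
  have hsub : {F : Set (Fin d → ℝ) | IsFace P F ∧ Module.finrank ℝ (vectorSpan ℝ F) = k} ⊆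
      (((W.powersetCard (k+1)).filter (Bad W)).image
        (fun S : Finset (Fin d → ℝ) => P ∩ (affineSpan ℝ (S : Set (Fin d → ℝ)) : Set (Fin d → ℝ))) : Finset (Set (Fin d → ℝ))) := by
    rintro F ⟨hF, hdim⟩
    have hF' : ∃ a : Fin d → ℝ, F = {x | x ∈ P ∧ ∀ y ∈ P, ell a y ≤ ell a x} := by
      rcases hF with rfl | ⟨a, ha⟩
      · refine ⟨0, ?_⟩
        ext x
        simp [ell_apply]
      · exact ⟨a, ha⟩
    obtain ⟨a, ha⟩ := hF'
    have hne : F.Nonempty := by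
      by_contra h
      rw [Set.not_nonempty_iff_eq_empty] at h
      subst h
      rw [vectorSpan_empty, finrank_bot] at hdim
      omega
    obtain ⟨x0, hx0⟩ := hne
    have hx0' := hx0
    rw [ha] at hx0'
    set μ := ell a x0 with hμ
    have hPμ : ∀ y ∈ P, ell a y ≤ μ := hx0'.2
    have hFμ : ∀ x, x ∈ F ↔ x ∈ P ∧ ell a x = μ := by
      intro x
      constructor
      · intro hx
        rw [ha] at hx
        exact ⟨hx.1, le_antisymm (hPμ x hx.1) (hx.2 x0 hx0'.1)⟩
      · rintro ⟨hx, hxm⟩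
        rw [ha]
        exact ⟨hx, fun y hy => hxm ▸ hPμ y hy⟩
    have hWP : (W : Set (Fin d → ℝ)) ⊆ P := subset_convexHull ℝ _
    obtain ⟨t, htsub, htspan, htind⟩ := exists_affineIndependent ℝ (V := Fin d → ℝ) (P := Fin d → ℝ) {y : Fin d → ℝ | y ∈ (W : Set (Fin d → ℝ)) ∧ ell a y = μ}
    have hFt : F ⊆ affineSpan ℝ t := by
      intro x hx
      rw [htspan]
      apply convexHull_subset_affineSpan
      exact face_hull a μ W (fun y hy => hPμ y (hWP hy)) x ((hFμ x).1 hx).1 ((hFμ x).1 hx).2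
    have htF : t ⊆ F := fun x hx => (hFμ x).2 ⟨hWP (htsub hx).1, (htsub hx).2⟩
    have htfin : t.Finite := W.finite_toSet.subset (fun x hx => (htsub hx).1)
    obtain ⟨S, rfl⟩ := htfin.exists_finset_coe
    have hspan : affineSpan ℝ (S : Set (Fin d → ℝ)) = affineSpan ℝ F :=
      le_antisymm (affineSpan_mono ℝ htF) (affineSpan_le.2 hFt)
    have hSne : S.Nonempty := by
      by_contra h
      rw [Finset.not_nonempty_iff_eq_empty] at h
      subst h
      have := hFt hx0
      simp at this
    have hcard : S.card = k + 1 := by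
      have : Nonempty (S : Set (Fin d → ℝ)) := hSne.to_subtype
      have h1 := htind.finrank_vectorSpan_add_one
      rw [Subtype.range_coe, ← direction_affineSpan, hspan, direction_affineSpan, hdim] at h1
      simpa using h1.symm
    have hSμ : ∀ x ∈ S, ell a x = μ := fun x hx => ((hFμ x).1 (htF hx)).2
    have hFeq : P ∩ (affineSpan ℝ (S : Set (Fin d → ℝ)) : Set (Fin d → ℝ)) = F := by
      apply Set.Subset.antisymm
      · rintro x ⟨hx, hx2⟩
        exact (hFμ x).2 ⟨hx, ell_affineSpan a μ S hSμ x hx2⟩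
      · intro x hx
        exact ⟨((hFμ x).1 hx).1, hFt hx⟩
    simp only [Finset.coe_image, Set.mem_image, Finset.mem_coe, Finset.mem_filter, Finset.mem_powersetCard]
    refine ⟨S, ⟨⟨fun x hx => (htsub hx).1, hcard⟩, ?_⟩, hFeq⟩
    intro hb
    have hbμ : ell a ((S.card : ℝ)⁻¹ • ∑ x ∈ S, x) = μ := by
      rw [map_smul, map_sum, Finset.sum_congr rfl hSμ, hcard]
      rw [Finset.sum_const, hcard, nsmul_eq_mul, smul_eq_mul]
      field_simp
    have h2 := face_hull a μ _ (fun y hy => hPμ y (hWP hy.1)) _ hb hbμ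
    have h3 : ({y | y ∈ (W : Set (Fin d → ℝ)) \ affineSpan ℝ (S : Set (Fin d → ℝ)) ∧ ell a y = μ} : Set (Fin d → ℝ)).Nonempty :=
      convexHull_nonempty_iff.1 ⟨_, h2⟩
    obtain ⟨y, hy1, hy2⟩ := h3
    exact hy1.2 (hFt ((hFμ y).2 ⟨hWP hy1.1, hy2⟩))
  unfold faceCount
  calc _ ≤ _ := Set.ncard_le_ncard hsub (Finset.finite_toSet _)
    _ = _ := Set.ncard_coe_finset _
    _ ≤ _ := Finset.card_image_le

lemma mem_cubeV {d : ℕ} (x : Fin d → ℝ) : x ∈ cubeV d ↔ ∃ y, bv y = x := by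
  simp [cubeV]

lemma card_cubeV (d : ℕ) : (cubeV d).card = 2 ^ d := by
  classical
  unfold cubeV
  have := Finset.card_image_of_injective (Finset.univ : Finset (Fin d → Bool)) (bv_injective (d := d))
  simpa using this

/-- the point set described by a matrix of Booleans -/
noncomputable def pts {d r : ℕ} (V : Fin d → Fin r → Bool) : Finset (Fin d → ℝ) := by
  classical exact Finset.univ.image (fun m => bv (fun i => V i m))

lemma mem_pts {d r : ℕ} (V : Fin d → Fin r → Bool) (x : Fin d → ℝ) :
    x ∈ pts V ↔ ∃ m, bv (fun i => V i m) = x := by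
  simp [pts]

lemma pts_subset {d r : ℕ} (V : Fin d → Fin r → Bool) : pts V ⊆ cubeV d := by
  intro x hx
  obtain ⟨m, rfl⟩ := (mem_pts V x).1 hx
  exact (mem_cubeV _).2 ⟨_, rfl⟩

lemma exists_pts {d r : ℕ} (S : Finset (Fin d → ℝ)) (hS : S ⊆ cubeV d) (hr : S.card = r) :
    ∃ V : Fin d → Fin r → Bool, pts V = S := by
  classical
  have e := S.equivFinOfCardEq hr
  have h : ∀ m : Fin r, ∃ y, bv y = (e.symm m).1 := fun m => (mem_cubeV _).1 (hS (e.symm m).2)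
  choose y hy using h
  refine ⟨fun i m => y m i, ?_⟩
  ext x
  rw [mem_pts]
  constructor
  · rintro ⟨m, rfl⟩
    have := (e.symm m).2
    rw [← hy m] at this
    exact this
  · intro hx
    refine ⟨e ⟨x, hx⟩, ?_⟩
    have := hy (e ⟨x, hx⟩)
    simpa using this

lemma pts_bary {d r : ℕ} (V : Fin d → Fin r → Bool) (hr : (pts V).card = r) :
    ((pts V).card : ℝ)⁻¹ • ∑ x ∈ pts V, x = bary V := by
  classical
  have hinj : Set.InjOn (fun m : Fin r => bv (fun i => V i m)) (Finset.univ : Finset (Fin r)) := by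
    apply Finset.card_image_iff.1
    rw [Finset.card_univ, Fintype.card_fin]
    refine Eq.trans ?_ hr
    unfold pts
    congr!
  have hs : ∑ x ∈ pts V, x = ∑ m : Fin r, bv (fun i => V i m) := by
    unfold pts
    exact Finset.sum_image hinj
  rw [hs, hr]
  ext i
  simp only [Pi.smul_apply, Finset.sum_apply, smul_eq_mul, bary, ones, bv]
  rw [Finset.sum_boole]
  field_simp

open Classical in
lemma span_count {d r : ℕ} (V : Fin d → Fin r → Bool) :
    (Finset.univ.filter (fun x : Fin d → Bool =>
      bv x ∈ affineSpan ℝ (pts V : Set (Fin d → ℝ)))).card ≤ 2 ^ (2 ^ r) := by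
  have hkey : ∀ x : Fin d → ℝ, x ∈ affineSpan ℝ (pts V : Set (Fin d → ℝ)) → ∀ i j, V i = V j → x i = x j := by
    intro x hx i j hij
    refine affineSpan_induction (p := fun x : Fin d → ℝ => x i = x j) hx ?_ ?_
    · intro y hy
      obtain ⟨m, rfl⟩ := (mem_pts V y).1 hy
      simp [bv, hij]
    · intro c u v w hu hv hw
      simp only [vsub_eq_sub, vadd_eq_add, Pi.add_apply, Pi.smul_apply, Pi.sub_apply, hu, hv, hw]
  let Φ : (Fin d → Bool) → ((Fin r → Bool) → Bool) := fun x p =>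
    if h : ∃ i, V i = p then x h.choose else false
  have := Finset.card_le_card_of_injOn (s := Finset.univ.filter (fun x : Fin d → Bool =>
      bv x ∈ affineSpan ℝ (pts V : Set (Fin d → ℝ)))) (t := Finset.univ) Φ (fun _ _ => Finset.mem_univ _) (by
    intro x hx y hy hxy
    have hx' := (Finset.mem_filter.1 hx).2
    have hy' := (Finset.mem_filter.1 hy).2
    ext i
    have h1 := congrFun hxy (V i)
    have hex : ∃ i', V i' = V i := ⟨i, rfl⟩
    simp only [Φ, hex, dif_pos] at h1
    have a1 := hkey _ hx' _ _ hex.choose_spec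
    have a2 := hkey _ hy' _ _ hex.choose_spec
    have b1 : bv x i = bv y i := by
      rw [← a1, ← a2]; simp only [bv, h1]
    simp only [bv] at b1
    cases hxi : x i <;> cases hyi : y i <;> simp_all)
  simpa using this

lemma super_count {α : Type*} [DecidableEq α] (C S A : Finset α) (hS : S ⊆ C) (hA : A ⊆ C \ S) (n : ℕ) :
    ((C.powersetCard n).filter (fun W => S ⊆ W ∧ Disjoint W A)).card
      ≤ (C.card - S.card - A.card).choose (n - S.card) := by
  have hc : ((C \ S) \ A).card = C.card - S.card - A.card := by
    rw [Finset.card_sdiff_of_subset hA, Finset.card_sdiff_of_subset hS]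
  rw [← hc, ← Finset.card_powersetCard]
  apply Finset.card_le_card_of_injOn (fun W => W \ S)
  · intro W hW
    obtain ⟨hW1, hSW, hd⟩ := Finset.mem_filter.1 hW
    obtain ⟨hWC, hWn⟩ := Finset.mem_powersetCard.1 hW1
    apply Finset.mem_coe.2
    rw [Finset.mem_powersetCard, Finset.card_sdiff_of_subset hSW, hWn]
    refine ⟨?_, rfl⟩
    intro x hx
    obtain ⟨hx1, hx2⟩ := Finset.mem_sdiff.1 hx
    exact Finset.mem_sdiff.2 ⟨Finset.mem_sdiff.2 ⟨hWC hx1, hx2⟩, Finset.disjoint_left.1 hd hx1⟩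
  · intro W hW W' hW' h
    have h1 := (Finset.mem_filter.1 hW).2.1
    have h2 := (Finset.mem_filter.1 hW').2.1
    simp only at h
    rw [← Finset.sdiff_union_of_subset h1, ← Finset.sdiff_union_of_subset h2, h]

lemma separate {d : ℕ} (T : Set (Fin d → ℝ)) (hT : T.Finite) (b : Fin d → ℝ) (hb : b ∉ convexHull ℝ T) :
    ∃ a : Fin d → ℝ, ∀ w ∈ T, ∑ i, a i * w i < ∑ i, a i * b i := by
  obtain ⟨f, u, h1, h2⟩ := geometric_hahn_banach_closed_point (convex_convexHull ℝ T)
    (hT.isClosed_convexHull ℝ) hb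
  have hf : ∀ x : Fin d → ℝ, f x = ∑ i, f (Pi.single i 1) * x i := by
    intro x
    conv_lhs => rw [pi_eq_sum_univ' x]
    rw [map_sum]
    apply Finset.sum_congr rfl
    intro i _
    rw [map_smul, smul_eq_mul, mul_comm]
  refine ⟨fun i => f (Pi.single i 1), fun w hw => ?_⟩
  rw [← hf, ← hf]
  exact (h1 w (subset_convexHull ℝ _ hw)).trans h2

open Classical in
lemma bad_count {d r n : ℕ} (V : Fin d → Fin r → Bool) (hr : (pts V).card = r) (hrn : r ≤ n) (hrN : r < 2 ^ d)
    (K : ℝ) (hK : ∀ a : Fin d → ℝ, K ≤ ((Finset.univ.filter (fun x : Fin d → Bool =>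
      ∑ i, a i * bary V i ≤ ∑ i, a i * bv x i)).card : ℝ)) :
    ((((cubeV d).powersetCard n).filter (fun W => pts V ⊆ W ∧ Bad W (pts V))).card : ℝ) ≤
      (HS d).card * (((2 ^ d - r).choose (n - r) : ℝ) *
        Real.exp (-((K - 2 ^ (2 ^ r)) * (n - r) / 2 ^ d))) := by
  set S := pts V with hS
  set E : Finset (Fin d → Bool) → Finset (Fin d → ℝ) := fun A =>
    (A.image bv).filter (fun x => x ∉ affineSpan ℝ (S : Set (Fin d → ℝ))) with hE
  have hcov : ((cubeV d).powersetCard n).filter (fun W => S ⊆ W ∧ Bad W S) ⊆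
      ((HS d).filter (fun A => K ≤ (A.card : ℝ))).biUnion (fun A =>
        ((cubeV d).powersetCard n).filter (fun W => S ⊆ W ∧ Disjoint W (E A))) := by
    intro W hW
    obtain ⟨hW1, hSW, hbad⟩ := Finset.mem_filter.1 hW
    unfold Bad at hbad
    rw [pts_bary V hr] at hbad
    obtain ⟨a, ha⟩ := separate _ (W.finite_toSet.subset Set.sdiff_subset) _ hbad
    simp only [Finset.mem_biUnion, Finset.mem_filter]
    refine ⟨Finset.univ.filter (fun x : Fin d → Bool => ∑ i, a i * bary V i ≤ ∑ i, a i * bv x i),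
      ⟨mem_HS a _, hK a⟩, hW1, hSW, ?_⟩
    rw [Finset.disjoint_left]
    intro w hw hwE
    simp only [hE, Finset.mem_filter, Finset.mem_image, Finset.mem_univ, true_and] at hwE
    obtain ⟨⟨x, hx, rfl⟩, hx2⟩ := hwE
    have := ha (bv x) ⟨hw, hx2⟩
    linarith
  have hone : ∀ A ∈ (HS d).filter (fun A => K ≤ (A.card : ℝ)),
      ((((cubeV d).powersetCard n).filter (fun W => S ⊆ W ∧ Disjoint W (E A))).card : ℝ) ≤
      ((2 ^ d - r).choose (n - r) : ℝ) * Real.exp (-((K - 2 ^ (2 ^ r)) * (n - r) / 2 ^ d)) := by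
    intro A hA
    have hKA := (Finset.mem_filter.1 hA).2
    have hES : E A ⊆ cubeV d \ S := by
      intro x hx
      obtain ⟨hx1, hx2⟩ := Finset.mem_filter.1 hx
      obtain ⟨y, _, rfl⟩ := Finset.mem_image.1 hx1
      exact Finset.mem_sdiff.2 ⟨(mem_cubeV _).2 ⟨y, rfl⟩, fun h => hx2 (subset_affineSpan ℝ _ h)⟩
    have h1 := super_count (cubeV d) S (E A) (pts_subset V) hES n
    rw [card_cubeV, hr] at h1
    have hq : (E A).card ≤ 2 ^ d - r := by
      have := Finset.card_le_card hES
      rwa [Finset.card_sdiff_of_subset (pts_subset V), card_cubeV, hr] at this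
    have h2 := choose_ratio_exp (2 ^ d - r) (E A).card (n - r) hq (by omega)
    have hqK : K - 2 ^ (2 ^ r) ≤ ((E A).card : ℝ) := by
      have e1 : A.card = (A.image bv).card := (Finset.card_image_of_injective _ bv_injective).symm
      have e2 := Finset.card_filter_add_card_filter_not (s := A.image bv)
        (fun x => x ∈ affineSpan ℝ (S : Set (Fin d → ℝ)))
      have e3 : ((A.image bv).filter (fun x => x ∈ affineSpan ℝ (S : Set (Fin d → ℝ)))).card ≤ 2 ^ (2 ^ r) := by
        refine le_trans ?_ (span_count V)
        rw [Finset.filter_image]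
        refine Finset.card_image_le.trans (Finset.card_le_card ?_)
        intro x hx
        exact Finset.mem_filter.2 ⟨Finset.mem_univ _, (Finset.mem_filter.1 hx).2⟩
      have e4 : A.card ≤ 2 ^ (2 ^ r) + (E A).card := by
        rw [e1, ← e2]
        simp only [hE]
        omega
      have e5 : (A.card : ℝ) ≤ 2 ^ (2 ^ r) + (E A).card := by exact_mod_cast e4
      linarith
    calc _ ≤ (((2 ^ d - r - (E A).card).choose (n - r) : ℕ) : ℝ) := Nat.cast_le.2 h1
      _ ≤ _ := h2
      _ ≤ _ := by
        refine mul_le_mul_of_nonneg_left (Real.exp_le_exp.2 (neg_le_neg ?_)) (Nat.cast_nonneg _)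
        rw [Nat.cast_sub hrn, Nat.cast_sub hrN.le]
        push_cast
        have hnr : (0:ℝ) ≤ (n:ℝ) - r := by
          have : (r:ℝ) ≤ n := by exact_mod_cast hrn
          linarith
        have hNr : (0:ℝ) < 2 ^ d - r := by
          have : (r:ℝ) < 2 ^ d := by exact_mod_cast hrN
          linarith
        calc (K - 2 ^ (2 ^ r)) * ((n:ℝ) - r) / 2 ^ d ≤ (E A).card * ((n:ℝ) - r) / 2 ^ d := by gcongr
          _ ≤ _ := by
            apply div_le_div_of_nonneg_left (by positivity) hNr
            have : (0:ℝ) ≤ r := by positivity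
            linarith
  calc _ ≤ ((((HS d).filter (fun A => K ≤ (A.card : ℝ))).biUnion (fun A =>
        ((cubeV d).powersetCard n).filter (fun W => S ⊆ W ∧ Disjoint W (E A)))).card : ℝ) := by
        exact_mod_cast Finset.card_le_card hcov
    _ ≤ ∑ A ∈ (HS d).filter (fun A => K ≤ (A.card : ℝ)),
        ((((cubeV d).powersetCard n).filter (fun W => S ⊆ W ∧ Disjoint W (E A))).card : ℝ) := by
        exact_mod_cast Finset.card_biUnion_le
    _ ≤ ∑ A ∈ (HS d).filter (fun A => K ≤ (A.card : ℝ)), _ := Finset.sum_le_sum hone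
    _ ≤ _ := by
        rw [Finset.sum_const, nsmul_eq_mul]
        gcongr
        exact Finset.filter_subset _ _

open Classical in
/-- Main finite estimate. -/
lemma main_finite {d k n : ℕ} (hk : 1 ≤ k) (hrn : k + 1 ≤ n) (hnN : n ≤ 2 ^ d) (hrN : k + 1 < 2 ^ d)
    (K c : ℝ) (hK : ∀ V : Fin d → Fin (k+1) → Bool,
      c * d ≤ ∑ i, binEnt ((ones (V i) : ℝ) / (k+1 : ℕ)) →
      ∀ a : Fin d → ℝ, K ≤ ((Finset.univ.filter (fun x : Fin d → Bool =>
      ∑ i, a i * bary V i ≤ ∑ i, a i * bv x i)).card : ℝ)) :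
    (∑ W ∈ Finset.powersetCard n (cubeV d), faceDensity k W) /
          ((Finset.powersetCard n (cubeV d)).card : ℝ) ≤
    ((Finset.univ.filter (fun V : Fin d → Fin (k+1) → Bool =>
      ¬ (c * d ≤ ∑ i, binEnt ((ones (V i) : ℝ) / (k+1 : ℕ))))).card : ℝ) / ((2 ^ d).choose (k+1) : ℝ)
     + (HS d).card * Real.exp (-((K - 2 ^ (2 ^ (k+1))) * (n - (k+1 : ℕ)) / 2 ^ d)) := by
  set r := k + 1 with hrdef
  set N := 2 ^ d with hN
  set Typ : (Fin d → Fin r → Bool) → Prop := fun V => c * d ≤ ∑ i, binEnt ((ones (V i) : ℝ) / (r : ℕ)) with hTyp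
  set X : ℝ := (HS d).card * Real.exp (-((K - 2 ^ (2 ^ r)) * (n - r) / 2 ^ d)) with hX
  set D : ℝ := ((N - r).choose (n - r) : ℝ) with hD
  have hDpos : 0 < D := by
    have : 0 < (N - r).choose (n - r) := Nat.choose_pos (by omega)
    rw [hD]; exact_mod_cast this
  have hNr : 0 < (N.choose r : ℝ) := by
    have : 0 < N.choose r := Nat.choose_pos hrN.le
    exact_mod_cast this
  have hNn : 0 < (N.choose n : ℝ) := by
    have : 0 < N.choose n := Nat.choose_pos hnN
    exact_mod_cast this
  have hnr : 0 < (n.choose r : ℝ) := by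
    have : 0 < n.choose r := Nat.choose_pos hrn
    exact_mod_cast this
  have hid : (N.choose n : ℝ) * n.choose r = N.choose r * D := by
    have := Nat.choose_mul (n := N) (k := n) (s := r) hrn
    rw [hD]
    exact_mod_cast this
  -- enumerate sets
  have hex : ∀ S : Finset (Fin d → ℝ), ∃ V : Fin d → Fin r → Bool,
      S ∈ (cubeV d).powersetCard r → pts V = S := by
    intro S
    by_cases hS : S ∈ (cubeV d).powersetCard r
    · obtain ⟨h1, h2⟩ := Finset.mem_powersetCard.1 hS
      obtain ⟨V, hV⟩ := exists_pts S h1 h2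
      exact ⟨V, fun _ => hV⟩
    · exact ⟨fun _ _ => false, fun h => absurd h hS⟩
  choose VS hVS using hex
  set cnt : Finset (Fin d → ℝ) → ℕ := fun S =>
    (((cubeV d).powersetCard n).filter (fun W => S ⊆ W ∧ Bad W S)).card with hcnt
  have hsum1 : ∑ W ∈ (cubeV d).powersetCard n, faceCount k (convexHull ℝ (W : Set (Fin d → ℝ)))
      ≤ ∑ S ∈ (cubeV d).powersetCard r, cnt S := by
    calc _ ≤ ∑ W ∈ (cubeV d).powersetCard n, ((W.powersetCard r).filter (Bad W)).card :=
          Finset.sum_le_sum fun W _ => face_bound k hk W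
      _ = ∑ S ∈ (cubeV d).powersetCard r, cnt S := by
          simp only [hcnt, Finset.card_eq_sum_ones]
          apply Finset.sum_comm'
          intro W S
          simp only [Finset.mem_filter, Finset.mem_powersetCard]
          constructor
          · rintro ⟨⟨h1, h2⟩, ⟨h3, h4⟩, h5⟩
            exact ⟨⟨⟨h1, h2⟩, h3, h5⟩, h3.trans h1, h4⟩
          · rintro ⟨⟨⟨h1, h2⟩, h3, h5⟩, h6, h4⟩
            exact ⟨⟨h1, h2⟩, ⟨h3, h4⟩, h5⟩
  have hgood : ∀ S ∈ (cubeV d).powersetCard r, Typ (VS S) → (cnt S : ℝ) ≤ X * D := by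
    intro S hS hT
    have hp := hVS S hS
    have hc : (pts (VS S)).card = r := by rw [hp]; exact (Finset.mem_powersetCard.1 hS).2
    have := bad_count (n := n) (VS S) hc hrn hrN K (hK (VS S) hT)
    rw [hp] at this
    simp only [hcnt]
    refine this.trans (le_of_eq ?_)
    rw [hX, hD]; ring
  have hall : ∀ S ∈ (cubeV d).powersetCard r, (cnt S : ℝ) ≤ D := by
    intro S hS
    obtain ⟨h1, h2⟩ := Finset.mem_powersetCard.1 hS
    have h3 := super_count (cubeV d) S ∅ h1 (by simp) n
    rw [card_cubeV, h2, Finset.card_empty, Nat.sub_zero] at h3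
    have h4 : cnt S ≤ (N - r).choose (n - r) := by
      refine le_trans ?_ h3
      simp only [hcnt]
      apply Finset.card_le_card
      intro W hW
      obtain ⟨a1, a2, a3⟩ := Finset.mem_filter.1 hW
      exact Finset.mem_filter.2 ⟨a1, a2, by simp⟩
    rw [hD]
    exact_mod_cast h4
  have hX0 : 0 ≤ X := by positivity
  set Bd := Finset.univ.filter (fun V : Fin d → Fin r → Bool => ¬ Typ V) with hBd
  have hsum2 : ∑ S ∈ (cubeV d).powersetCard r, (cnt S : ℝ) ≤ N.choose r * (X * D) + Bd.card * D := by
    rw [← Finset.sum_filter_add_sum_filter_not _ (fun S => Typ (VS S))]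
    gcongr
    · calc _ ≤ ∑ S ∈ ((cubeV d).powersetCard r).filter (fun S => Typ (VS S)), X * D :=
            Finset.sum_le_sum fun S hS => hgood S (Finset.mem_filter.1 hS).1 (Finset.mem_filter.1 hS).2
        _ ≤ _ := by
            rw [Finset.sum_const, nsmul_eq_mul]
            gcongr
            refine (Finset.card_filter_le _ _).trans ?_
            rw [Finset.card_powersetCard, card_cubeV]
    · calc _ ≤ ∑ S ∈ ((cubeV d).powersetCard r).filter (fun S => ¬ Typ (VS S)), D :=
            Finset.sum_le_sum fun S hS => hall S (Finset.mem_filter.1 hS).1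
        _ ≤ _ := by
            rw [Finset.sum_const, nsmul_eq_mul]
            gcongr
            apply Finset.card_le_card_of_injOn VS
            · intro S hS
              exact Finset.mem_coe.2 (Finset.mem_filter.2 ⟨Finset.mem_univ _, (Finset.mem_filter.1 hS).2⟩)
            · intro S hS S' hS' h
              rw [← hVS S (Finset.mem_filter.1 hS).1, ← hVS S' (Finset.mem_filter.1 hS').1, h]
  have hdens : ∑ W ∈ Finset.powersetCard n (cubeV d), faceDensity k W =
      (∑ W ∈ (cubeV d).powersetCard n, (faceCount k (convexHull ℝ (W : Set (Fin d → ℝ))) : ℝ)) / n.choose r := by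
    rw [Finset.sum_div]
    apply Finset.sum_congr rfl
    intro W hW
    unfold faceDensity
    rw [(Finset.mem_powersetCard.1 hW).2]
  rw [hdens, Finset.card_powersetCard, card_cubeV, div_div, mul_comm (n.choose r : ℝ), hid,
    div_le_iff₀ (by positivity)]
  calc _ ≤ ∑ S ∈ (cubeV d).powersetCard r, (cnt S : ℝ) := by exact_mod_cast hsum1
    _ ≤ _ := hsum2
    _ = _ := by field_simp; ring

lemma binEnt_eq (x : ℝ) : binEnt x = Real.binEntropy x / Real.log 2 := by
  unfold binEnt Real.binEntropy Real.logb
  ring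

lemma binEnt_le_one (x : ℝ) : binEnt x ≤ 1 := by
  rw [binEnt_eq, div_le_one (Real.log_pos (by norm_num))]
  exact Real.binEntropy_le_log_two

noncomputable def meanEnt (r : ℕ) : ℝ :=
  (∑ v : Fin r → Bool, binEnt ((ones v : ℝ) / r)) / 2 ^ r

lemma meanEnt_le_one (r : ℕ) : meanEnt r ≤ 1 := by
  unfold meanEnt
  rw [div_le_one (by positivity)]
  calc _ ≤ ∑ v : Fin r → Bool, (1:ℝ) := Finset.sum_le_sum fun v _ => binEnt_le_one _
    _ = _ := by simp

lemma sum_ones (r : ℕ) (g : ℕ → ℝ) :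
    ∑ v : Fin r → Bool, g (ones v) = ∑ j ∈ Finset.range (r+1), (r.choose j : ℝ) * g j := by
  classical
  have h := Finset.sum_powerset_apply_card g (x := (Finset.univ : Finset (Fin r)))
  simp only [Finset.card_univ, Fintype.card_fin, nsmul_eq_mul] at h
  rw [← h]
  refine Finset.sum_bij' (fun v _ => Finset.univ.filter (fun m => v m = true)) (fun s _ m => decide (m ∈ s)) ?_ ?_ ?_ ?_ ?_
  · intro v _; simp
  · intro s _; simp
  · intro v _; ext m; simp
  · intro s _; ext m; simp
  · intro v _; rfl

lemma tau_eq (k : ℕ) (hk : 1 ≤ k) : tau k = 1 - meanEnt (k+1) := by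
  unfold tau tauT Hent meanEnt
  rw [sum_ones (k+1) (fun j => binEnt ((j:ℝ) / (k+1 : ℕ)))]
  have h0 : binEnt 0 = 0 := by simp [binEnt]
  have h1 : binEnt 1 = 0 := by simp [binEnt]
  have hs : ∑ j ∈ Finset.range (k+1+1), ((k+1).choose j : ℝ) * binEnt ((j:ℝ) / (k+1 : ℕ))
      = ∑ i ∈ Finset.Icc 1 (k+1-1), ((k+1).choose i : ℝ) * binEnt ((i : ℝ) / (k+1 : ℕ)) := by
    rw [Finset.sum_range_succ, Finset.sum_range_succ', Nat.add_sub_cancel]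
    have e : ((k+1 : ℕ):ℝ) / ((k+1 : ℕ):ℝ) = 1 := div_self (by positivity)
    rw [e, h1]
    simp only [Nat.cast_zero, zero_div, h0, mul_zero, add_zero]
    rw [Finset.range_eq_Ico, Finset.sum_Ico_add' (fun i => ((k+1).choose i : ℝ) * binEnt ((i : ℝ) / (k+1 : ℕ))) 0 k 1]
    rfl
  rw [hs]
  have hp : (2:ℝ) ^ ((1:ℤ) - ((k+1 : ℕ) : ℤ)) = 2 / 2 ^ (k+1) := by
    rw [zpow_sub₀ (by norm_num), zpow_one, zpow_natCast]
  rw [hp]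
  have h2k : (2:ℝ) ≤ 2 ^ k := by
    calc (2:ℝ) = 2 ^ 1 := by norm_num
      _ ≤ 2 ^ k := pow_le_pow_right₀ (by norm_num) hk
  have hne : (2:ℝ) ^ (k+1) - 2 ≠ 0 := by rw [pow_succ]; linarith
  have hpow : (2:ℝ) ^ (k+1) ≠ 0 := by positivity
  have : (1 - (2:ℝ) / 2 ^ (k+1)) = ((2:ℝ)^(k+1) - 2) / 2 ^ (k+1) := by field_simp
  rw [this]
  field_simp

lemma nontyp_count (r : ℕ) : ∃ M : ℝ, 0 ≤ M ∧ ∀ (d : ℕ) (δ : ℝ), 0 < d → 0 < δ →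
    ((Finset.univ.filter (fun V : Fin d → Fin r → Bool =>
      ¬ ((meanEnt r - δ) * d ≤ ∑ i, binEnt ((ones (V i) : ℝ) / r)))).card : ℝ) ≤ (2 ^ r : ℝ) ^ d * (M / (δ ^ 2 * d)) := by
  classical
  refine ⟨∑ v : Fin r → Bool, (binEnt ((ones v : ℝ) / r) - meanEnt r) ^ 2,
    Finset.sum_nonneg fun _ _ => sq_nonneg _, ?_⟩
  intro d δ hd hδ
  have h := cheb_count (α := Fin r → Bool) d hd
    (∑ v : Fin r → Bool, (binEnt ((ones v : ℝ) / r) - meanEnt r) ^ 2) δ hδ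
    (fun _ v => binEnt ((ones v : ℝ) / r) - meanEnt r) (by
      intro i
      rw [Finset.sum_sub_distrib]
      simp [meanEnt]
      field_simp
      ring) (by
      intro i a
      exact Finset.single_le_sum (f := fun v : Fin r → Bool => (binEnt ((ones v : ℝ) / r) - meanEnt r) ^ 2)
        (fun _ _ => sq_nonneg _) (Finset.mem_univ a))
  refine le_trans ?_ (h.trans (le_of_eq (by simp)))
  gcongr with V
  intro hV
  push Not at hV
  rw [Finset.sum_sub_distrib]
  simp
  linarith

lemma choose_lower (N r : ℕ) (h : 2 * r ≤ N) :
    (N:ℝ) ^ r ≤ (2 ^ r * r.factorial : ℝ) * (N.choose r : ℝ) := by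
  have h1 := Nat.pow_le_choose (α := ℝ) r N
  rw [div_le_iff₀ (by positivity)] at h1
  have h2 : (N:ℝ) ≤ 2 * ((N + 1 - r : ℕ) : ℝ) := by
    have : N ≤ 2 * (N + 1 - r) := by omega
    exact_mod_cast this
  calc (N:ℝ) ^ r ≤ (2 * ((N + 1 - r : ℕ) : ℝ)) ^ r := by gcongr
    _ = 2 ^ r * ((N + 1 - r : ℕ) : ℝ) ^ r := mul_pow _ _ _
    _ ≤ 2 ^ r * (N.choose r * r.factorial) := by gcongr
    _ = _ := by ring

lemma HS_card_exp (d : ℕ) : ((HS d).card : ℝ) ≤ Real.exp (((d:ℝ) + 2) ^ 2) := by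
  have h : ((HS d).card : ℝ) ≤ (d + 2) * (2 ^ d) ^ (d + 1) := by exact_mod_cast HS_card d
  have h2 : (2:ℝ) ≤ Real.exp 1 := by
    have := Real.add_one_le_exp (1:ℝ); linarith
  have h3 : (d:ℝ) + 2 ≤ Real.exp ((d:ℝ) + 2) := by
    have := Real.add_one_le_exp ((d:ℝ)+2); linarith
  calc _ ≤ _ := h
    _ ≤ Real.exp ((d:ℝ) + 2) * ((Real.exp 1) ^ d) ^ (d+1) := by gcongr
    _ = Real.exp (((d:ℝ) + 2) + d * (d + 1)) := by
        rw [← pow_mul, ← Real.exp_nat_mul, ← Real.exp_add]; push_cast; ring_nf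
    _ ≤ _ := by
        apply Real.exp_le_exp.2
        have : (0:ℝ) ≤ d := by positivity
        nlinarith

lemma growth (β C : ℝ) (hβ : 0 < β) (hC : 0 < C) :
    ∀ᶠ d : ℕ in atTop, C * (((d:ℝ) + 2) ^ 2 + d) ≤ (2:ℝ) ^ (β * d) := by
  set γ := β * Real.log 2 with hγ
  have hγ0 : 0 < γ := mul_pos hβ (Real.log_pos (by norm_num))
  have h1 : ∀ᶠ d : ℕ in atTop, 60 * C / γ ^ 3 ≤ (d:ℝ) := tendsto_natCast_atTop_atTop.eventually_ge_atTop _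
  filter_upwards [h1, eventually_ge_atTop 1] with d hd hd1
  have hd1' : (1:ℝ) ≤ d := by exact_mod_cast hd1
  have he : (2:ℝ) ^ (β * d) = Real.exp (γ * d) := by
    rw [Real.rpow_def_of_pos (by norm_num), hγ]; ring_nf
  rw [he]
  have h2 := Real.pow_div_factorial_le_exp (γ * d) (by positivity) 3
  rw [div_le_iff₀ (by positivity)] at hd
  refine le_trans ?_ h2
  have h3 : ((d:ℝ) + 2) ^ 2 + d ≤ 10 * d ^ 2 := by nlinarith
  calc C * (((d:ℝ) + 2) ^ 2 + d) ≤ C * (10 * d ^ 2) := by gcongr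
    _ = (60 * C) * d ^ 2 / 6 := by ring
    _ ≤ (d * γ ^ 3) * d ^ 2 / 6 := by gcongr
    _ = _ := by rw [mul_pow]; norm_num [Nat.factorial]; ring

/-- Above the threshold `τ_k`, the expected `k`-face density of the convex hull of a
uniformly random `n(d)`-element subset of `{0,1}^d` tends to 0. -/
theorem stmt1 (k : ℕ) (hk : 1 ≤ k) (ε : ℝ) (hε : 0 < ε) (n : ℕ → ℕ)
    (hup : ∀ d, n d ≤ 2 ^ d)
    (hthr : ∀ d : ℕ, (2 : ℝ) ^ ((tau k + ε) * (d : ℝ)) ≤ (n d : ℝ)) :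
    Tendsto (fun d : ℕ =>
        (∑ W ∈ Finset.powersetCard (n d) (cubeV d), faceDensity k W) /
          ((Finset.powersetCard (n d) (cubeV d)).card : ℝ))
      atTop (nhds 0) := by
  classical
  have hτ := tau_eq k hk
  set r : ℕ := k + 1 with hr
  set c0 := meanEnt r with hc0
  have hc1 : c0 ≤ 1 := meanEnt_le_one r
  have hr0 : (0:ℝ) < r := by exact_mod_cast Nat.succ_pos k
  -- `ε ≤ c0`
  have hεc : ε ≤ c0 := by
    have h1 := hthr 1
    have h2 : (n 1 : ℝ) ≤ 2 := by exact_mod_cast hup 1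
    have h3 : (2:ℝ) ^ ((tau k + ε) * ((1:ℕ):ℝ)) ≤ (2:ℝ) ^ (1:ℝ) := by
      rw [Real.rpow_one]; exact h1.trans h2
    have h4 := (Real.rpow_le_rpow_left_iff (by norm_num : (1:ℝ) < 2)).1 h3
    rw [hτ] at h4
    push_cast at h4
    linarith
  set δ := ε / 4 with hδ
  have hδ0 : 0 < δ := by positivity
  obtain ⟨M, hM0, hM⟩ := nontyp_count r
  set C1 : ℝ := (2 ^ r * r.factorial) * (M / δ ^ 2) with hC1
  have hub : ∀ᶠ d : ℕ in atTop, (∑ W ∈ Finset.powersetCard (n d) (cubeV d), faceDensity k W) /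
          ((Finset.powersetCard (n d) (cubeV d)).card : ℝ) ≤ C1 / d + Real.exp (-(d:ℝ)) := by
    have g1 := growth (ε / 2) (8 * r) (by positivity) (by positivity)
    have g2 := growth (ε / 2) (4 * r * 2 ^ (2 ^ r)) (by positivity) (by positivity)
    have g3 : ∀ᶠ d : ℕ in atTop, 2 * (r:ℝ) ^ 3 / δ ^ 2 ≤ (d:ℝ) :=
      tendsto_natCast_atTop_atTop.eventually_ge_atTop _
    filter_upwards [g1, g2, g3, eventually_ge_atTop 1] with d g1 g2 g3 hd
    have hd' : (1:ℝ) ≤ d := by exact_mod_cast hd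
    set L : ℝ := (2:ℝ) ^ (ε / 2 * d) with hL
    have hL0 : 0 < L := by positivity
    have hsq : (1:ℝ) ≤ ((d:ℝ) + 2) ^ 2 + d := by nlinarith
    have hL1 : 8 * (r:ℝ) ≤ L := by
      refine le_trans ?_ g1
      exact le_mul_of_one_le_right (by positivity) hsq
    have hL2 : 4 * (r:ℝ) * 2 ^ (2 ^ r) ≤ L := by
      refine le_trans ?_ g2
      exact le_mul_of_one_le_right (by positivity) hsq
    have hnL : L ≤ n d := by
      refine le_trans ?_ (hthr d)
      apply Real.rpow_le_rpow_of_exponent_le (by norm_num)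
      apply mul_le_mul_of_nonneg_right _ (by positivity)
      rw [hτ]; linarith
    have hn8 : 8 * r ≤ n d := by
      have : (8 * r : ℝ) ≤ n d := hL1.trans hnL
      exact_mod_cast this
    have hnN := hup d
    set K : ℝ := (2:ℝ) ^ ((c0 - δ - δ) * d) / (2 * r) with hK
    have hmain := main_finite (d := d) (k := k) (n := n d) hk (by omega) hnN (by omega) K (c0 - δ) (by
      intro V hV a
      exact halfspace_count (r := k + 1) (by omega) V (c0 - δ) δ hδ0 g3 hV a)
    refine hmain.trans ?_
    apply add_le_add
    · have h1 := hM d δ (by omega) hδ0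
      have h2 := choose_lower (2 ^ d) r (by omega)
      have hcp : (0:ℝ) < ((2 ^ d).choose r : ℝ) := by
        have : 0 < (2 ^ d).choose r := Nat.choose_pos (by omega)
        exact_mod_cast this
      rw [div_le_iff₀ hcp]
      refine h1.trans ?_
      have e : ((2:ℝ) ^ r) ^ d = (((2 ^ d : ℕ)) : ℝ) ^ r := by
        push_cast; rw [← pow_mul, ← pow_mul, mul_comm]
      rw [e]
      calc _ ≤ (2 ^ r * r.factorial : ℝ) * ((2 ^ d).choose r : ℝ) * (M / (δ ^ 2 * d)) := by gcongr
        _ = _ := by rw [hC1]; field_simp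
    · have hKL : L / (2 * r) ≤ K := by
        rw [hK]
        gcongr
        rw [hL]
        apply Real.rpow_le_rpow_of_exponent_le (by norm_num)
        apply mul_le_mul_of_nonneg_right _ (by positivity)
        linarith
      have hK2 : (2:ℝ) ^ (2 ^ r) ≤ K / 2 := by
        have : 2 * (2:ℝ) ^ (2 ^ r) ≤ L / (2 * r) := by
          rw [le_div_iff₀ (by positivity)]; linarith
        linarith
      have hn2 : (n d : ℝ) / 2 ≤ n d - (r : ℕ) := by
        have : (8 * r : ℝ) ≤ n d := hL1.trans hnL
        linarith
      have hexp : L / (8 * r) ≤ (K - 2 ^ (2 ^ r)) * (n d - (r : ℕ)) / 2 ^ d := by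
        calc L / (8 * r) = (K / 2) * ((2:ℝ) ^ ((tau k + ε) * (d : ℝ)) / 2) / 2 ^ d := by
              rw [hK, hL, ← Real.rpow_natCast 2 d]
              have : (2:ℝ) ^ (ε / 2 * d) = (2:ℝ) ^ ((c0 - δ - δ) * d) * (2:ℝ) ^ ((tau k + ε) * (d : ℝ)) / (2:ℝ) ^ (d:ℝ) := by
                rw [← Real.rpow_add (by norm_num), ← Real.rpow_sub (by norm_num)]
                congr 1
                rw [hτ, hδ]; ring
              rw [this]
              field_simp
              ring
          _ ≤ (K / 2) * ((n d : ℝ) / 2) / 2 ^ d := by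
              have := hthr d
              have hK0 : 0 ≤ K := by positivity
              gcongr
          _ ≤ _ := by
              have hK0 : 0 ≤ K := by positivity
              gcongr <;> linarith
      calc _ ≤ Real.exp (((d:ℝ) + 2) ^ 2) * Real.exp (-(L / (8 * r))) := by
            gcongr
            exact HS_card_exp d
        _ = Real.exp (((d:ℝ) + 2) ^ 2 - L / (8 * r)) := by rw [← Real.exp_add]; ring_nf
        _ ≤ _ := by
            apply Real.exp_le_exp.2
            have : ((d:ℝ) + 2) ^ 2 + d ≤ L / (8 * r) := by
              rw [le_div_iff₀ (by positivity)]; linarith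
            linarith
  have hlim : Tendsto (fun d : ℕ => C1 / d + Real.exp (-(d:ℝ))) atTop (nhds 0) := by
    have a1 : Tendsto (fun d : ℕ => C1 / (d:ℝ)) atTop (nhds 0) := tendsto_const_div_atTop_nhds_zero_nat C1
    have a2 : Tendsto (fun d : ℕ => Real.exp (-(d:ℝ))) atTop (nhds 0) :=
      Real.tendsto_exp_neg_atTop_nhds_zero.comp tendsto_natCast_atTop_atTop
    simpa using a1.add a2
  refine tendsto_of_tendsto_of_tendsto_of_le_of_le' tendsto_const_nhds hlim (Eventually.of_forall ?_) hub
  intro d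
  apply div_nonneg _ (by positivity)
  apply Finset.sum_nonneg
  intro W _
  unfold faceDensity
  positivity
end

section
/- Let β, ε > 0. If ñ: ℕ → ℕ satisfies ñ(d) ≥ 2^{(1−β+ε)d} for all d, and for each d the points X₁,…,X_{ñ(d)} are chosen independently and uniformly at random from {0,1}^d, then the probability that {z ∈ (0,1)^d : H(z) ≥ β} ⊆ conv{X₁,…,X_{ñ(d)}} tends to 1 as d → ∞. -/
open Filter
open scoped BigOperators

/-- Bernoulli product weight. -/
noncomputable def bw {d : ℕ} (p : Fin d → ℝ) (x : Fin d → Bool) : ℝ :=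
  ∏ i, if x i then p i else 1 - p i

lemma bw_prod {d : ℕ} (p : Fin d → ℝ) (g : Fin d → Bool → ℝ) :
    ∑ x, bw p x * ∏ i, g i (x i) = ∏ i, (p i * g i true + (1 - p i) * g i false) := by
  have h := Finset.prod_univ_sum (fun _ : Fin d => (Finset.univ : Finset Bool))
    (fun i b => (if b then p i else 1 - p i) * g i b)
  simp only [Fintype.piFinset_univ, Fintype.sum_bool] at h
  simp only [Finset.prod_mul_distrib] at h
  simp only [bw]
  rw [← h]
  simp

lemma bw_sum {d : ℕ} (p : Fin d → ℝ) : ∑ x, bw p x = 1 := by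
  have := bw_prod p (fun _ _ => 1)
  simpa using this

lemma bw_nonneg {d : ℕ} (p : Fin d → ℝ) (h0 : ∀ i, 0 ≤ p i) (h1 : ∀ i, p i ≤ 1)
    (x : Fin d → Bool) : 0 ≤ bw p x := by
  refine Finset.prod_nonneg fun i _ => ?_
  split_ifs
  · exact h0 i
  · linarith [h1 i]

lemma bw_cov {d : ℕ} (p : Fin d → ℝ) (i j : Fin d) :
    ∑ x, bw p x * ((bv x i - p i) * (bv x j - p j)) = if i = j then p i * (1 - p i) else 0 := by
  have h := bw_prod p (fun k b => (if k = i then (if b then 1 else 0) - p i else 1) *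
    (if k = j then (if b then 1 else 0) - p j else 1))
  simp only [Finset.prod_mul_distrib, Finset.prod_ite_eq', Finset.mem_univ, if_true] at h
  simp only [bv]
  rw [h]
  by_cases hij : i = j
  · subst hij
    rw [if_pos rfl]
    rw [Finset.prod_eq_single i]
    · simp; ring
    · intro k _ hk; simp [hk]
    · simp
  · rw [if_neg hij]
    apply Finset.prod_eq_zero (Finset.mem_univ i)
    simp [hij]; ring

lemma bw_var {d : ℕ} (p c : Fin d → ℝ) :
    ∑ x, bw p x * (∑ i, c i * (bv x i - p i)) ^ 2 = ∑ i, c i ^ 2 * (p i * (1 - p i)) := by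
  have h1 : ∀ x : Fin d → Bool, bw p x * (∑ i, c i * (bv x i - p i)) ^ 2 =
      ∑ i, ∑ j, c i * c j * (bw p x * ((bv x i - p i) * (bv x j - p j))) := by
    intro x
    rw [pow_two, Finset.sum_mul_sum, Finset.mul_sum]
    refine Finset.sum_congr rfl fun i _ => ?_
    rw [Finset.mul_sum]
    refine Finset.sum_congr rfl fun j _ => ?_
    ring
  simp only [h1]
  rw [Finset.sum_comm]
  refine Finset.sum_congr rfl fun i _ => ?_
  rw [Finset.sum_comm]
  simp only [← Finset.mul_sum, bw_cov, mul_ite, mul_zero, Finset.sum_ite_eq, Finset.mem_univ,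
    if_true]
  ring

lemma cheb {d : ℕ} (p c : Fin d → ℝ) (h0 : ∀ i, 0 ≤ p i) (h1 : ∀ i, p i ≤ 1) (G : ℝ)
    (hG : 0 ≤ G) (hv : ∑ i, c i ^ 2 * (p i * (1 - p i)) ≤ G ^ 2 / 4) :
    ∑ x with ∑ i, c i * (bv x i - p i) < -G, bw p x ≤ 1 / 4 := by
  classical
  have hle : ∑ x with ∑ i, c i * (bv x i - p i) < -G, bw p x * (∑ i, c i * (bv x i - p i)) ^ 2
      ≤ G ^ 2 / 4 := by
    refine le_trans ?_ hv
    rw [← bw_var]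
    refine Finset.sum_le_sum_of_subset_of_nonneg (Finset.filter_subset _ _) fun x _ _ => ?_
    exact mul_nonneg (bw_nonneg p h0 h1 x) (sq_nonneg _)
  rcases hG.eq_or_lt with h | h
  · subst h
    have : ∑ x with ∑ i, c i * (bv x i - p i) < -0, bw p x = 0 := by
      refine Finset.sum_eq_zero fun x hx => ?_
      have h3 : bw p x * (∑ i, c i * (bv x i - p i)) ^ 2 ≤ 0 := by
        refine le_trans (Finset.single_le_sum (f := fun x => bw p x * (∑ i, c i * (bv x i - p i)) ^ 2)
          (fun y _ => mul_nonneg (bw_nonneg p h0 h1 y) (sq_nonneg _)) hx) (by simpa using hle)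
      simp only [Finset.mem_filter] at hx
      have h4 : 0 < (∑ i, c i * (bv x i - p i)) ^ 2 := by
        apply sq_pos_of_neg; simpa using hx.2
      have := bw_nonneg p h0 h1 x
      by_contra hne
      have : 0 < bw p x := lt_of_le_of_ne this (Ne.symm hne)
      linarith [mul_pos this h4]
    rw [this]; norm_num
  · have h5 : G ^ 2 * ∑ x with ∑ i, c i * (bv x i - p i) < -G, bw p x ≤ G ^ 2 / 4 := by
      refine le_trans ?_ hle
      rw [Finset.mul_sum]
      refine Finset.sum_le_sum fun x hx => ?_
      rw [mul_comm]
      refine mul_le_mul_of_nonneg_left ?_ (bw_nonneg p h0 h1 x)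
      simp only [Finset.mem_filter] at hx
      nlinarith [hx.2]
    have : 0 < G ^ 2 := by positivity
    by_contra hc
    push Not at hc
    nlinarith

lemma pick {ι : Type*} [DecidableEq ι] (s : Finset ι) (f : ι → ℝ) (m : ℕ) :
    ∃ M ⊆ s, M.card ≤ m ∧ ∀ j ∈ s \ M, (m : ℝ) * f j ≤ ∑ i ∈ M, f i := by
  induction m with
  | zero => exact ⟨∅, by simp, by simp, by simp⟩
  | succ m ih =>
    obtain ⟨M, hM, hc, h⟩ := ih
    by_cases he : (s \ M).Nonempty
    · obtain ⟨j, hj, hmax⟩ := Finset.exists_max_image (s \ M) f he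
      have hj' := Finset.mem_sdiff.1 hj
      refine ⟨insert j M, Finset.insert_subset hj'.1 hM, ?_, ?_⟩
      · rw [Finset.card_insert_of_notMem hj'.2]; omega
      · intro k hk
        rw [Finset.sum_insert hj'.2]
        have hk' : k ∈ s \ M := by
          simp only [Finset.mem_sdiff, Finset.mem_insert] at hk ⊢; tauto
        have := h k hk'
        have := hmax k hk'
        push_cast; linarith
    · refine ⟨M, hM, by omega, fun j hj => absurd ⟨j, hj⟩ he⟩

/-- log likelihood formula -/
lemma bw_eq {d : ℕ} (p : Fin d → ℝ)
    (x : Fin d → Bool) (hx : 0 < bw p x) :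
    bw p x = Real.exp (-∑ i, Real.binEntropy (p i) -
      ∑ i, (Real.log (1 - p i) - Real.log (p i)) * (bv x i - p i)) := by
  have hne : ∀ i, (if x i then p i else 1 - p i) ≠ 0 := by
    intro i hi
    have : bw p x = 0 := Finset.prod_eq_zero (Finset.mem_univ i) hi
    linarith
  rw [← Real.exp_log hx, bw, Real.log_prod (fun i _ => hne i), ← Finset.sum_neg_distrib,
    ← Finset.sum_sub_distrib]
  congr 1
  refine Finset.sum_congr rfl fun i _ => ?_
  simp only [bv, Real.binEntropy, Real.log_inv]
  split_ifs <;> ring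

set_option maxHeartbeats 1000000 in
lemma key_pos (e : ℝ) (he : 0 < e) : ∀ᶠ d : ℕ in atTop, ∀ a z : Fin d → ℝ, (∀ i, 0 ≤ a i) →
    (∀ i, 1 / 2 ≤ z i ∧ z i < 1) →
    Real.exp (∑ i, Real.binEntropy (z i) - e * d) ≤
      (Finset.card {x : Fin d → Bool | ∑ i, a i * z i ≤ ∑ i, a i * bv x i} : ℝ) := by
  classical
  set δ := e / 5 with hδ
  have hδ0 : 0 < δ := by positivity
  obtain ⟨η, hη0, hη1, hη⟩ : ∃ η : ℝ, 0 < η ∧ η < 1 ∧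
      ∀ p, 1 - η < p → p < 1 → Real.binEntropy p ≤ δ := by
    have hc : ContinuousAt Real.binEntropy 1 := Real.binEntropy_continuous.continuousAt
    obtain ⟨η, h1, h2⟩ := Metric.continuousAt_iff.1 hc δ hδ0
    refine ⟨min η (1 / 2), by positivity, by
      have := min_le_right η (1 / 2); linarith, fun p hp hp1 => ?_⟩
    have h3 := min_le_left η (1 / 2)
    have h4 := @h2 p (by rw [Real.dist_eq, abs_lt]; constructor <;> linarith)
    rw [Real.binEntropy_one, Real.dist_eq, sub_zero] at h4
    exact (le_abs_self _).trans h4.le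
  set K := -Real.log η with hK
  have hcast := tendsto_natCast_atTop_atTop (R := ℝ)
  filter_upwards [hcast.eventually_ge_atTop (4 * K ^ 2 / δ ^ 2),
    hcast.eventually_ge_atTop (4 / (δ ^ 2 * η)), hcast.eventually_ge_atTop (2 / δ),
    hcast.eventually_ge_atTop 1] with d hd1 hd2 hd3 hd4 a z ha hz
  rw [div_le_iff₀ (by positivity)] at hd1 hd2 hd3
  have hd0 : (0 : ℝ) < d := by linarith
  set m := ⌈δ * d⌉₊ with hm
  have hm1 : δ * d ≤ m := Nat.le_ceil _
  have hm2 : (m : ℝ) < δ * d + 1 := Nat.ceil_lt_add_one (by positivity)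
  have hm0 : (0 : ℝ) < m := lt_of_lt_of_le (by positivity) hm1
  set R0 : Finset (Fin d) := Finset.univ.filter fun i => z i ≤ 1 - η with hR0
  obtain ⟨M, hMs, hMc, hMt⟩ := pick R0 (fun i => a i * (1 - z i)) m
  set G := ∑ i ∈ M, a i * (1 - z i) with hGdef
  have hq : ∀ i, 0 ≤ a i * (1 - z i) := fun i => mul_nonneg (ha i) (by linarith [(hz i).2])
  have hG : 0 ≤ G := Finset.sum_nonneg fun i _ => hq i
  set p : Fin d → ℝ := fun i => if i ∈ R0 \ M then z i else 1 with hp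
  have hp0 : ∀ i, 0 ≤ p i := by
    intro i; simp only [hp]; split_ifs
    · linarith [(hz i).1]
    · norm_num
  have hp1 : ∀ i, p i ≤ 1 := by
    intro i; simp only [hp]; split_ifs
    · exact (hz i).2.le
    · norm_num
  have hvA : ∑ i, a i ^ 2 * (p i * (1 - p i)) ≤ G ^ 2 / 4 := by
    have h1 : ∀ i ∈ Finset.univ, a i ^ 2 * (p i * (1 - p i)) ≤ G ^ 2 / (m ^ 2 * η) := by
      intro i _
      simp only [hp]
      split_ifs with hi
      · have h2 := hMt i hi
        have h3 : z i ≤ 1 - η := by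
          have := (Finset.mem_sdiff.1 hi).1
          simpa [hR0] using this
        have h4 : (m * (a i * (1 - z i))) ^ 2 ≤ G ^ 2 :=
          pow_le_pow_left₀ (mul_nonneg hm0.le (hq i)) h2 2
        rw [le_div_iff₀ (by positivity)]
        refine le_trans ?_ h4
        have h5 : z i * η ≤ 1 - z i := by nlinarith [(hz i).1, (hz i).2]
        have h6 : 0 ≤ (m : ℝ) ^ 2 * a i ^ 2 * (1 - z i) :=
          mul_nonneg (by positivity) (by linarith [(hz i).2])
        nlinarith [mul_le_mul_of_nonneg_left h5 h6]
      · simp; positivity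
    refine (Finset.sum_le_card_nsmul _ _ _ h1).trans ?_
    simp only [Finset.card_univ, Fintype.card_fin, nsmul_eq_mul]
    rw [mul_div_assoc', div_le_div_iff₀ (by positivity) (by norm_num)]
    have h7 : 4 * d ≤ m ^ 2 * η := by
      have : (δ * d) ^ 2 ≤ (m : ℝ) ^ 2 := pow_le_pow_left₀ (by positivity) hm1 2
      nlinarith [mul_le_mul_of_nonneg_right this hη0.le, mul_le_mul_of_nonneg_left hd2 hd0.le]
    nlinarith [mul_le_mul_of_nonneg_left h7 (sq_nonneg G)]
  set c : Fin d → ℝ := fun i => Real.log (1 - p i) - Real.log (p i) with hc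
  have hvB : ∑ i, c i ^ 2 * (p i * (1 - p i)) ≤ (δ * d) ^ 2 / 4 := by
    have h1 : ∀ i ∈ Finset.univ, c i ^ 2 * (p i * (1 - p i)) ≤ K ^ 2 := by
      intro i _
      simp only [hc, hp]
      split_ifs with hi
      · have h3 : z i ≤ 1 - η := by
          have := (Finset.mem_sdiff.1 hi).1
          simpa [hR0] using this
        have hz1 := (hz i).1
        have hz2 := (hz i).2
        have h4 : Real.log (1 - z i) ≤ Real.log (z i) :=
          Real.log_le_log (by linarith) (by linarith)
        have h5 : Real.log η ≤ Real.log (1 - z i) := Real.log_le_log hη0 (by linarith)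
        have h6 : Real.log (z i) ≤ 0 := Real.log_nonpos (by linarith) (by linarith)
        have h7 : (Real.log (1 - z i) - Real.log (z i)) ^ 2 ≤ K ^ 2 := by
          rw [hK]; apply sq_le_sq'
          · linarith
          · linarith
        have h8 : z i * (1 - z i) ≤ 1 := by nlinarith
        have h9 : 0 ≤ z i * (1 - z i) := mul_nonneg (by linarith) (by linarith)
        calc _ ≤ (Real.log (1 - z i) - Real.log (z i)) ^ 2 * 1 :=
              mul_le_mul_of_nonneg_left h8 (sq_nonneg _)
          _ ≤ K ^ 2 := by linarith
      · simp; positivity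
    refine (Finset.sum_le_card_nsmul _ _ _ h1).trans ?_
    simp only [Finset.card_univ, Fintype.card_fin, nsmul_eq_mul]
    nlinarith [mul_le_mul_of_nonneg_left hd1 hd0.le]
  have hEnt : ∑ i, Real.binEntropy (z i) - δ * d - m * Real.log 2 ≤
      ∑ i, Real.binEntropy (p i) := by
    have h1 : ∀ i ∈ Finset.univ, Real.binEntropy (z i) ≤
        Real.binEntropy (p i) + δ + (if i ∈ M then Real.log 2 else 0) := by
      intro i _
      have hlog : 0 < Real.log 2 := Real.log_pos (by norm_num)
      simp only [hp]
      by_cases hM : i ∈ M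
      · simp only [Finset.mem_sdiff, hM, not_true, and_false, if_false, if_true,
          Real.binEntropy_one]
        linarith [@Real.binEntropy_le_log_two (z i)]
      · by_cases hR : z i ≤ 1 - η
        · simp [hM, hR0, hR]; linarith
        · simp only [Finset.mem_sdiff, hM, hR0, hR, Finset.mem_filter, and_false, if_false,
            false_and, Real.binEntropy_one]
          push Not at hR
          linarith [hη _ hR (hz i).2]
    have h2 := Finset.sum_le_sum h1
    simp only [Finset.sum_add_distrib, Finset.sum_const, Finset.card_univ, Fintype.card_fin,
      nsmul_eq_mul, Finset.sum_ite_mem, Finset.univ_inter] at h2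
    have h3 : (M.card : ℝ) ≤ m := by exact_mod_cast hMc
    nlinarith [mul_le_mul_of_nonneg_right h3 (Real.log_pos (by norm_num : (1:ℝ) < 2)).le]
  have hA := cheb p a hp0 hp1 G hG hvA
  have hB := cheb p c hp0 hp1 (δ * d) (by positivity) hvB
  set S : Finset (Fin d → Bool) :=
    Finset.univ.filter fun x => ∑ i, a i * z i ≤ ∑ i, a i * bv x i with hS
  have hmean : ∑ i, a i * z i + G ≤ ∑ i, a i * p i := by
    have h1 : ∀ i ∈ Finset.univ, a i * z i + (if i ∈ M then a i * (1 - z i) else 0) ≤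
        a i * p i := by
      intro i _
      have := hq i
      simp only [hp]
      by_cases hM : i ∈ M
      · simp [hM]; linarith
      · simp only [hM, if_false]
        split_ifs
        · linarith
        · linarith
    have h2 := Finset.sum_le_sum h1
    simpa only [Finset.sum_add_distrib, Finset.sum_ite_mem, Finset.univ_inter] using h2
  set E := Real.exp (-∑ i, Real.binEntropy (p i) + δ * d) with hE
  have hpt : ∀ x ∈ Finset.univ, bw p x ≤
      (if ∑ i, a i * (bv x i - p i) < -G then bw p x else 0) +
      (if ∑ i, c i * (bv x i - p i) < -(δ * d) then bw p x else 0) +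
      (if x ∈ S then E else 0) := by
    intro x _
    have hw := bw_nonneg p hp0 hp1 x
    have hE0 : 0 < E := Real.exp_pos _
    by_cases h1 : ∑ i, a i * (bv x i - p i) < -G
    · rw [if_pos h1]
      split_ifs <;> linarith
    by_cases h2 : ∑ i, c i * (bv x i - p i) < -(δ * d)
    · rw [if_pos h2]
      split_ifs <;> linarith
    have hxS : x ∈ S := by
      simp only [hS, Finset.mem_filter, Finset.mem_univ, true_and]
      simp only [mul_sub, Finset.sum_sub_distrib] at h1
      linarith
    rw [if_neg h1, if_neg h2, if_pos hxS]
    rcases hw.eq_or_lt with h | h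
    · linarith
    · rw [bw_eq p x h, hE]
      have : Real.exp (-∑ i, Real.binEntropy (p i) - ∑ i, c i * (bv x i - p i)) ≤
        Real.exp (-∑ i, Real.binEntropy (p i) + δ * d) := Real.exp_le_exp.2 (by linarith)
      simpa using this
  have hsum := Finset.sum_le_sum hpt
  rw [bw_sum, Finset.sum_add_distrib, Finset.sum_add_distrib, ← Finset.sum_filter,
    ← Finset.sum_filter, Finset.sum_ite_mem, Finset.univ_inter, Finset.sum_const,
    nsmul_eq_mul] at hsum
  have hhalf : 1 / 2 ≤ (S.card : ℝ) * E := by linarith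
  have hlog1 : Real.log 2 ≤ 1 := by
    have := Real.log_le_sub_one_of_pos (by norm_num : (0:ℝ) < 2); linarith
  have hlog0 : 0 < Real.log 2 := Real.log_pos (by norm_num)
  have hfin : Real.exp (∑ i, Real.binEntropy (z i) - e * d) * E ≤ 1 / 2 := by
    rw [hE, ← Real.exp_add]
    have : (1 / 2 : ℝ) = Real.exp (-Real.log 2) := by
      rw [Real.exp_neg, Real.exp_log (by norm_num)]; norm_num
    rw [this, Real.exp_le_exp]
    have : (m : ℝ) * Real.log 2 ≤ m := by nlinarith
    have h5 : e * d = 5 * (δ * d) := by rw [hδ]; ring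
    linarith
  exact le_of_mul_le_mul_right (hfin.trans hhalf) (Real.exp_pos _)

lemma key (e : ℝ) (he : 0 < e) : ∀ᶠ d : ℕ in atTop, ∀ a z : Fin d → ℝ,
    (∀ i, z i ∈ Set.Ioo (0 : ℝ) 1) →
    Real.exp (∑ i, Real.binEntropy (z i) - e * d) ≤
      (Finset.card {x : Fin d → Bool | ∑ i, a i * z i ≤ ∑ i, a i * bv x i} : ℝ) := by
  filter_upwards [key_pos e he] with d h a z hz
  set y : Fin d → ℝ := fun i => if 0 ≤ a i then z i else 1 - z i with hy
  have hyE : ∀ i, Real.binEntropy (y i) = Real.binEntropy (z i) := by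
    intro i; simp only [hy]; split_ifs <;> simp
  have hy1 : ∀ i, y i < 1 := by
    intro i; simp only [hy]; split_ifs
    · exact (hz i).2
    · linarith [(hz i).1]
  have h1 := h (fun i => |a i|) (fun i => max (y i) (1 / 2)) (fun i => abs_nonneg _)
    (fun i => ⟨le_max_right _ _, max_lt (hy1 i) (by norm_num)⟩)
  have h2 : ∑ i, Real.binEntropy (z i) ≤ ∑ i, Real.binEntropy (max (y i) (1 / 2)) := by
    refine Finset.sum_le_sum fun i _ => ?_
    rw [← hyE]
    rcases le_total (y i) (1 / 2) with h | h
    · rw [max_eq_right h, one_div, Real.binEntropy_two_inv]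
      exact Real.binEntropy_le_log_two
    · rw [max_eq_left h]
  refine (Real.exp_le_exp.2 (by linarith)).trans (h1.trans ?_)
  norm_cast
  refine Finset.card_le_card_of_injOn (fun x i => if 0 ≤ a i then x i else !(x i)) ?_ ?_
  · intro x hx
    simp only [Finset.coe_filter, Finset.mem_univ, true_and, Set.mem_ofPred_eq] at hx ⊢
    have h3 : ∑ i, |a i| * y i ≤ ∑ i, |a i| * bv x i := by
      refine le_trans (Finset.sum_le_sum fun i _ => ?_) hx
      exact mul_le_mul_of_nonneg_left (le_max_left _ _) (abs_nonneg _)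
    rw [← sub_nonneg, ← Finset.sum_sub_distrib] at h3 ⊢
    refine h3.trans_eq (Finset.sum_congr rfl fun i _ => ?_)
    simp only [hy, bv]
    by_cases h0 : 0 ≤ a i
    · simp only [h0, if_true, abs_of_nonneg h0]
    · simp only [h0, if_false, abs_of_neg (not_le.1 h0)]
      cases x i <;> simp <;> ring
  · intro x _ x' _ hxx
    funext i
    have := congrFun hxx i
    simp only at this
    split_ifs at this
    · exact this
    · simpa using this

open Classical in
/-- Family of halfspace sections of the cube. -/
noncomputable def hsF (d : ℕ) : Finset (Finset (Fin d → Bool)) :=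
  Finset.univ.filter fun T => ∃ (a : Fin d → ℝ) (c : ℝ),
    T = Finset.univ.filter fun x => c ≤ ∑ i, a i * bv x i

lemma hsF_shatters {d : ℕ} (s : Finset (Fin d → Bool)) (hs : (hsF d).Shatters s) :
    s.card ≤ d + 1 := by
  classical
  by_contra hlt
  push Not at hlt
  have hna : ¬ AffineIndependent ℝ (fun x : s => bv (x : Fin d → Bool)) := by
    intro h
    have h1 := h.card_le_finrank_succ
    have h2 := Submodule.finrank_le (vectorSpan ℝ (Set.range fun x : s => bv (x : Fin d → Bool)))
    rw [Module.finrank_fin_fun] at h2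
    simp only [Fintype.card_coe] at h1
    omega
  obtain ⟨I, y, hy1, hy2⟩ := Convex.radon_partition hna
  obtain ⟨T, hT, hsT⟩ := @hs (Finset.univ.filter fun x => ∃ h : x ∈ s, (⟨x, h⟩ : s) ∈ I) (by
    intro x hx
    simp only [Finset.mem_filter] at hx
    exact hx.2.1)
  simp only [hsF, Finset.mem_filter, Finset.mem_univ, true_and] at hT
  obtain ⟨a, c, rfl⟩ := hT
  have key : ∀ x : s, x ∈ I ↔ c ≤ ∑ i, a i * bv (x : Fin d → Bool) i := by
    intro x
    have := Finset.ext_iff.1 hsT x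
    simpa using this.symm
  let L : (Fin d → ℝ) →ₗ[ℝ] ℝ := ∑ i, a i • LinearMap.proj i
  have hL : ∀ v, L v = ∑ i, a i * v i := by
    intro v; simp [L]
  have c1 : convexHull ℝ ((fun x : s => bv (x : Fin d → Bool)) '' I) ⊆ {v | c ≤ L v} := by
    apply convexHull_min
    · rintro _ ⟨x, hx, rfl⟩
      simpa [hL] using (key x).1 hx
    · exact convex_halfSpace_ge L.isLinear c
  have c2 : convexHull ℝ ((fun x : s => bv (x : Fin d → Bool)) '' Iᶜ) ⊆ {v | L v < c} := by
    apply convexHull_min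
    · rintro _ ⟨x, hx, rfl⟩
      have : ¬ _ := fun h => hx ((key x).2 h)
      simpa [hL] using this
    · exact convex_halfSpace_lt L.isLinear c
  have h1 : c ≤ L y := c1 hy1
  have h2 : L y < c := c2 hy2
  linarith

lemma hsF_card (d : ℕ) : ((hsF d).card : ℝ) ≤ Real.exp ((d + 2 : ℝ) ^ 2) := by
  classical
  have h1 : (hsF d).card ≤ ∑ k ∈ Finset.range (d + 2), (2 ^ d) ^ (d + 1) := by
    refine (Finset.card_le_card_shatterer _).trans ?_
    have h2 : (hsF d).shatterer ⊆ (Finset.range (d + 2)).biUnion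
        fun k => Finset.powersetCard k Finset.univ := by
      intro s hs
      have := hsF_shatters s (Finset.mem_shatterer.1 hs)
      simp only [Finset.mem_biUnion, Finset.mem_range, Finset.mem_powersetCard]
      exact ⟨s.card, by omega, Finset.subset_univ _, rfl⟩
    refine (Finset.card_le_card h2).trans (Finset.card_biUnion_le.trans ?_)
    refine Finset.sum_le_sum fun k hk => ?_
    rw [Finset.card_powersetCard]
    simp only [Finset.card_univ, Fintype.card_fun, Fintype.card_bool, Fintype.card_fin]
    refine (Nat.choose_le_pow _ _).trans ?_
    exact Nat.pow_le_pow_right (by positivity) (by simp at hk; omega)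
  simp only [Finset.sum_const, Finset.card_range, smul_eq_mul] at h1
  have h3 : ((hsF d).card : ℝ) ≤ (d + 2) * (2 ^ d) ^ (d + 1) := by exact_mod_cast h1
  refine h3.trans ?_
  have e1 : (2 : ℝ) ≤ Real.exp 1 := by linarith [Real.add_one_le_exp (1:ℝ)]
  have e2 : (d + 2 : ℝ) ≤ Real.exp (d + 1) := by linarith [Real.add_one_le_exp (d + 1:ℝ)]
  have e3 : ((2:ℝ) ^ d) ^ (d + 1) ≤ Real.exp (d * (d + 1)) := by
    rw [← pow_mul]
    refine (pow_le_pow_left₀ (by norm_num) e1 _).trans_eq ?_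
    rw [← Real.exp_nat_mul]; push_cast; simp
  calc _ ≤ Real.exp (d + 1) * Real.exp (d * (d + 1)) := by gcongr
    _ = Real.exp ((d + 1) + d * (d + 1)) := (Real.exp_add _ _).symm
    _ ≤ _ := by
      apply Real.exp_le_exp.2
      nlinarith [(Nat.cast_nonneg d : (0:ℝ) ≤ d)]

lemma sep {d n : ℕ} (ω : Fin n → Fin d → Bool) (z : Fin d → ℝ)
    (hz : z ∉ convexHull ℝ (bv '' Set.range ω)) :
    ∃ a : Fin d → ℝ, ∀ k, ∑ i, a i * bv (ω k) i < ∑ i, a i * z i := by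
  have hfin : (bv '' Set.range ω).Finite := (Set.finite_range ω).image _
  obtain ⟨f, u, h1, h2⟩ := geometric_hahn_banach_closed_point (convex_convexHull ℝ _)
    (hfin.isClosed_convexHull ℝ) hz
  have hf : ∀ v : Fin d → ℝ, f v = ∑ i, f (Pi.single i 1) * v i := by
    intro v
    conv_lhs => rw [pi_eq_sum_univ' v]
    rw [map_sum]
    refine Finset.sum_congr rfl fun i _ => ?_
    rw [map_smul, smul_eq_mul, mul_comm]
  refine ⟨fun i => f (Pi.single i 1), fun k => ?_⟩
  rw [← hf, ← hf]
  exact (h1 _ (subset_convexHull ℝ _ ⟨_, ⟨k, rfl⟩, rfl⟩)).trans h2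

/-- Union bound. -/
lemma union_bound {d n : ℕ} (t : ℝ) (good : Set (Fin n → Fin d → Bool))
    (hbad : ∀ ω ∉ good, ∃ T ∈ hsF d, t ≤ (T.card : ℝ) ∧ ∀ k, ω k ∉ T) :
    1 - (hsF d).card * Real.exp (-(n * (t / 2 ^ d))) ≤
      (good.ncard : ℝ) / (Fintype.card (Fin n → Fin d → Bool) : ℝ) := by
  classical
  set F := (hsF d).filter fun T => t ≤ (T.card : ℝ) with hF
  set N : ℝ := (2 : ℝ) ^ d with hN
  have hN0 : 0 < N := by positivity
  have hcard : (Fintype.card (Fin n → Fin d → Bool) : ℝ) = N ^ n := by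
    simp [hN]
  have h1 : (goodᶜ).ncard ≤ ∑ T ∈ F, (Tᶜ.card) ^ n := by
    have hsub : goodᶜ ⊆ ((F.biUnion fun T => Fintype.piFinset fun _ : Fin n => Tᶜ :
        Finset (Fin n → Fin d → Bool)) : Set (Fin n → Fin d → Bool)) := by
      intro ω hω
      obtain ⟨T, hT, ht, hk⟩ := hbad ω hω
      simp only [Finset.coe_biUnion, Set.mem_iUnion, Finset.mem_coe, Fintype.mem_piFinset,
        Finset.mem_compl]
      exact ⟨T, by simp [hF, hT, ht], hk⟩
    refine (Set.ncard_le_ncard hsub (Finset.finite_toSet _)).trans ?_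
    rw [Set.ncard_coe_finset]
    refine Finset.card_biUnion_le.trans (Finset.sum_le_sum fun T _ => ?_)
    simp [Fintype.card_piFinset]
  have h2 : ∀ T ∈ F, ((Tᶜ.card : ℝ)) ^ n ≤ N ^ n * Real.exp (-(n * (t / N))) := by
    intro T hT
    have ht : t ≤ T.card := (Finset.mem_filter.1 hT).2
    have h3 : (T.card : ℝ) + Tᶜ.card = N := by
      have := Finset.card_add_card_compl T
      simp only [Fintype.card_fun, Fintype.card_bool, Fintype.card_fin] at this
      rw [hN]; exact_mod_cast this
    have h4 : (Tᶜ.card : ℝ) ≤ N * Real.exp (-(t / N)) := by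
      have := Real.add_one_le_exp (-(t / N))
      have h5 := mul_le_mul_of_nonneg_left this hN0.le
      have h6 : N * (-(t / N) + 1) = N - t := by field_simp; ring
      linarith
    refine (pow_le_pow_left₀ (Nat.cast_nonneg _) h4 n).trans_eq ?_
    rw [mul_pow, ← Real.exp_nat_mul]
    congr 2; ring
  have h3 : ((goodᶜ).ncard : ℝ) ≤ (hsF d).card * (N ^ n * Real.exp (-(n * (t / N)))) := by
    have : ((goodᶜ).ncard : ℝ) ≤ ∑ T ∈ F, ((Tᶜ.card : ℝ)) ^ n := by exact_mod_cast h1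
    refine this.trans ((Finset.sum_le_card_nsmul _ _ _ h2).trans ?_)
    rw [nsmul_eq_mul]
    gcongr
    exact Finset.filter_subset _ _
  have h4 : (good.ncard : ℝ) + (goodᶜ).ncard = N ^ n := by
    rw [← hcard, ← Nat.card_eq_fintype_card]
    exact_mod_cast Set.ncard_add_ncard_compl good
  rw [hcard, le_div_iff₀ (by positivity)]
  nlinarith

/-- If `ñ(d) ≥ 2^{(1-β+ε)d}` and `X₁,…,X_{ñ(d)}` are independent uniform points of
`{0,1}^d`, then with probability tending to 1 the region
`{z ∈ (0,1)^d : H(z) ≥ β}` is contained in their convex hull, where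
`H(z) = (1/d) ∑ⱼ h(zⱼ)`. -/
theorem stmt9 (β ε : ℝ) (hβ : 0 < β) (hε : 0 < ε) (nt : ℕ → ℕ)
    (hn : ∀ d : ℕ, (2 : ℝ) ^ ((1 - β + ε) * (d : ℝ)) ≤ (nt d : ℝ)) :
    Tendsto (fun d : ℕ =>
        (({ω : Fin (nt d) → Fin d → Bool |
              {z : Fin d → ℝ | (∀ i, z i ∈ Set.Ioo (0 : ℝ) 1) ∧
                  β ≤ (1 / (d : ℝ)) * ∑ i, binEnt (z i)} ⊆
                convexHull ℝ (bv '' Set.range ω)}.ncard : ℝ) /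
          (Fintype.card (Fin (nt d) → Fin d → Bool) : ℝ)))
      atTop (nhds 1) := by
  have hlog0 : 0 < Real.log 2 := Real.log_pos (by norm_num)
  set e := ε * Real.log 2 / 2 with he
  have he0 : 0 < e := by positivity
  have hlim : Tendsto (fun d : ℕ => 1 - Real.exp ((d + 2 : ℝ) ^ 2 - Real.exp (e * d)))
      atTop (nhds 1) := by
    have h1 : Tendsto (fun x : ℝ => (x + 2) ^ 2 - Real.exp (e * x)) atTop atBot := by
      have h2 : Tendsto (fun x : ℝ => Real.exp (e * x) * ((x + 2) ^ 2 / Real.exp (e * x) - 1))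
          atTop atBot := by
        have h3 : Tendsto (fun x : ℝ => Real.exp (e * x)) atTop atTop :=
          Real.tendsto_exp_atTop.comp (tendsto_id.const_mul_atTop he0)
        have hk : ∀ k : ℕ, Tendsto (fun x : ℝ => x ^ k / Real.exp (e * x)) atTop (nhds 0) := by
          intro k
          have := tendsto_rpow_mul_exp_neg_mul_atTop_nhds_zero (k : ℝ) e he0
          refine this.congr fun x => ?_
          rw [Real.rpow_natCast, neg_mul, Real.exp_neg]; rfl
        have h4 : Tendsto (fun x : ℝ => (x + 2) ^ 2 / Real.exp (e * x)) atTop (nhds 0) := by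
          have := ((hk 2).add ((hk 1).const_mul 4)).add ((hk 0).const_mul 4)
          simp only [mul_zero, add_zero] at this
          refine this.congr fun x => ?_
          field_simp; ring
        have h5 := h4.sub_const 1
        exact h3.atTop_mul_neg (by norm_num) h5
      refine h2.congr fun x => ?_
      have := (Real.exp_pos (e * x)).ne'
      field_simp
    have h6 := (Real.tendsto_exp_atBot.comp h1).comp (tendsto_natCast_atTop_atTop (R := ℝ))
    simpa using h6.const_sub 1
  refine tendsto_of_tendsto_of_tendsto_of_le_of_le' hlim tendsto_const_nhds ?_ ?_
  · filter_upwards [key e he0, eventually_ge_atTop 1] with d hd hd1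
    have hd0 : (0 : ℝ) < d := by exact_mod_cast hd1
    set t := Real.exp (β * d * Real.log 2 - e * d) with ht
    refine le_trans ?_ (union_bound t _ ?_)
    · have h1 : Real.exp (e * d) ≤ nt d * (t / 2 ^ d) := by
        have h2 : Real.exp (e * d) = (2 : ℝ) ^ ((1 - β + ε) * (d : ℝ)) * (t / 2 ^ d) := by
          rw [Real.rpow_def_of_pos (by norm_num), ht, ← Real.rpow_natCast 2 d,
            Real.rpow_def_of_pos (by norm_num), ← Real.exp_sub, ← Real.exp_add, he]
          congr 1; ring
        rw [h2]
        exact mul_le_mul_of_nonneg_right (hn d) (by positivity)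
      have h3 : (hsF d).card * Real.exp (-(nt d * (t / 2 ^ d))) ≤
          Real.exp ((d + 2 : ℝ) ^ 2) * Real.exp (-Real.exp (e * d)) := by
        gcongr
        exact hsF_card d
      rw [← Real.exp_add, ← sub_eq_add_neg] at h3
      linarith
    · intro ω hω
      simp only [Set.mem_ofPred_eq, Set.not_subset] at hω
      obtain ⟨z, ⟨hz1, hz2⟩, hz3⟩ := hω
      obtain ⟨a, ha⟩ := sep ω z hz3
      refine ⟨Finset.univ.filter fun x => ∑ i, a i * z i ≤ ∑ i, a i * bv x i, ?_, ?_, ?_⟩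
      · classical
        simp only [hsF, Finset.mem_filter, Finset.mem_univ, true_and]
        refine ⟨a, ∑ i, a i * z i, ?_⟩
        congr
      · refine le_trans (Real.exp_le_exp.2 ?_) (hd a z hz1)
        simp only [binEnt_eq, ← Finset.sum_div] at hz2
        have h4 : 1 / (d : ℝ) * ((∑ i, Real.binEntropy (z i)) / Real.log 2) =
          (∑ i, Real.binEntropy (z i)) / (d * Real.log 2) := by field_simp
        rw [h4, le_div_iff₀ (by positivity)] at hz2
        linarith
      · intro k
        simpa using ha k
  · refine Eventually.of_forall fun d => ?_
    refine div_le_one_of_le₀ ?_ (by positivity)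
    rw [← Nat.card_eq_fintype_card]
    exact_mod_cast Set.ncard_le_card _
end
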